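/- arXiv:2401.12510 — 11 statements merged into one kernel-verified Lean document; each statement's English description precedes it below -/
import Mathlib

section
/- Let R be a centrally essential ring and let J be a right ideal of R which is semiprime as a ring. Then J is reduced, i.e., J contains no nonzero nilpotent element; in particular, there is no nonzero a ∈ J with a² = 0. -/
/-- A unital ring `R` is centrally essential if for every nonzero `a ∈ R` there exists a
central element `c` such that `a * c` is a nonzero central element. -/
def IsCentrallyEssential (R : Type*) [Ring R] : Prop :=
  ∀ a : R, a ≠ 0 → ∃ c ∈ Set.center R, a * c ∈ Set.center R ∧ a * c ≠ 0

/-!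
Let `a ∈ S` satisfy `a ^ 2 = 0`, and suppose that some right multiple `z = a * c` is a nonzero
element of the center of `S`. Since `z` commutes with `a`, we have `z ^ 2 = a ^ 2 * c ^ 2 = 0`.
The annihilator `A` of `z` in `S` is then an ideal of `S` containing `z`, and `z` kills it, so the
intersection of `A` with its own left annihilator is a nonzero ideal of `S` of square zero. Hence
a semiprime `S` whose nonzero elements all have nonzero central right multiples is reduced.
-/

section NonUnitalRing

variable {R : Type*} [NonUnitalRing R]

/-- The semiprime property of `S` as a ring, used for a right ideal regarded as a possibly
non-unital ring: `S` has no nonzero ideal of square zero. The ideals of `S` are encoded as additive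
subgroups of the ambient ring `R` rather than of the subtype. -/
def IsSemiprimeAsRing (S : NonUnitalSubring R) : Prop :=
  ∀ N : AddSubgroup R, (N : Set R) ⊆ (S : Set R) →
    (∀ x ∈ S, ∀ n ∈ N, x * n ∈ N) → (∀ x ∈ S, ∀ n ∈ N, n * x ∈ N) →
    (∀ m ∈ N, ∀ n ∈ N, m * n = 0) → N = ⊥

variable {S : NonUnitalSubring R}

theorem IsSemiprimeAsRing.eq_zero_of_mem_of_forall_mul_eq_zero (hS : IsSemiprimeAsRing S)
    {A : AddSubgroup R} (hAS : (A : Set R) ⊆ S) (hleft : ∀ x ∈ S, ∀ y ∈ A, x * y ∈ A)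
    (hright : ∀ x ∈ S, ∀ y ∈ A, y * x ∈ A) {z : R} (hz : z ∈ A)
    (hzA : ∀ y ∈ A, z * y = 0) : z = 0 := by
  let N : AddSubgroup R :=
    { carrier := {x | x ∈ A ∧ ∀ y ∈ A, x * y = 0}
      zero_mem' := ⟨A.zero_mem, fun y _ => zero_mul y⟩
      add_mem' := fun ⟨hx, hxA⟩ ⟨hx', hxA'⟩ =>
        ⟨A.add_mem hx hx', fun y hy => by rw [add_mul, hxA y hy, hxA' y hy, add_zero]⟩
      neg_mem' := fun ⟨hx, hxA⟩ =>
        ⟨A.neg_mem hx, fun y hy => by rw [neg_mul, hxA y hy, neg_zero]⟩ }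
  have hN : N = ⊥ := by
    refine hS N (fun x hx => hAS hx.1) ?_ ?_ fun m hm n hn => hm.2 n hn.1
    · rintro s hs x ⟨hx, hxA⟩
      exact ⟨hleft s hs x hx, fun y hy => by rw [mul_assoc, hxA y hy, mul_zero]⟩
    · rintro s hs x ⟨hx, hxA⟩
      exact ⟨hright s hs x hx, fun y hy => by rw [mul_assoc, hxA _ (hleft s hs y hy)]⟩
  have hzN : z ∈ N := ⟨hz, hzA⟩
  rwa [hN, AddSubgroup.mem_bot] at hzN

theorem IsSemiprimeAsRing.eq_zero_of_mem_centralizer_of_mul_self_eq_zero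
    (hS : IsSemiprimeAsRing S) {z : R} (hz : z ∈ S)
    (hcomm : z ∈ Set.centralizer (S : Set R)) (hzz : z * z = 0) : z = 0 := by
  let A : AddSubgroup R := S.toAddSubgroup ⊓ (AddMonoidHom.mulLeft z).ker
  refine hS.eq_zero_of_mem_of_forall_mul_eq_zero (A := A) (fun x hx => hx.1) ?_ ?_ ⟨hz, hzz⟩
    fun y hy => hy.2
  · rintro s hs x ⟨hx, hzx : z * x = 0⟩
    have hzsx : z * (s * x) = 0 := by rw [← mul_assoc, ← hcomm s hs, mul_assoc, hzx, mul_zero]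
    exact ⟨S.mul_mem hs hx, hzsx⟩
  · rintro s hs x ⟨hx, hzx : z * x = 0⟩
    have hzxs : z * (x * s) = 0 := by rw [← mul_assoc, hzx, zero_mul]
    exact ⟨S.mul_mem hx hs, hzxs⟩

theorem IsSemiprimeAsRing.eq_zero_of_mul_self_eq_zero (hS : IsSemiprimeAsRing S)
    (hcentral : ∀ a ∈ S, a ≠ 0 → ∃ c, a * c ∈ S ∧ a * c ∈ Set.centralizer (S : Set R) ∧ a * c ≠ 0)
    {a : R} (ha : a ∈ S) (haa : a * a = 0) : a = 0 := by
  by_contra ha0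
  obtain ⟨c, hcS, hcomm, hc0⟩ := hcentral a ha ha0
  have hsq : a * c * (a * c) = 0 := calc
    a * c * (a * c) = a * c * a * c := (mul_assoc _ _ _).symm
    _ = a * (a * c) * c := by rw [hcomm a ha]
    _ = a * a * c * c := by rw [mul_assoc a a c]
    _ = 0 := by rw [haa, zero_mul, zero_mul]
  exact hc0 (hS.eq_zero_of_mem_centralizer_of_mul_self_eq_zero hcS hcomm hsq)

end NonUnitalRing

theorem eq_zero_of_isNilpotent_of_forall_mul_self_eq_zero {M : Type*} [MonoidWithZero M]
    {S : Subsemigroup M} (hsq : ∀ a ∈ S, a * a = 0 → a = 0) {a : M} (ha : a ∈ S)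
    (hnil : IsNilpotent a) : a = 0 := by
  obtain ⟨n, hn⟩ := hnil
  have hpow : a ^ 2 ^ n = 0 := pow_eq_zero_of_le n.lt_two_pow_self.le hn
  clear hn
  induction n generalizing a with
  | zero => simpa only [pow_zero, pow_one] using hpow
  | succ n ih =>
    refine hsq a ha (ih (S.mul_mem ha ha) ?_)
    rwa [← sq, ← pow_mul, ← pow_succ']

theorem stmt0_general {R : Type*} [Ring R] {S : NonUnitalSubring R} (hS : IsSemiprimeAsRing S)
    (hcentral : ∀ a ∈ S, a ≠ 0 →
      ∃ c, a * c ∈ S ∧ a * c ∈ Set.centralizer (S : Set R) ∧ a * c ≠ 0) :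
    (∀ a ∈ S, IsNilpotent a → a = 0) ∧ (∀ a ∈ S, a * a = 0 → a = 0) := by
  have hsq : ∀ a ∈ S, a * a = 0 → a = 0 := fun _ => hS.eq_zero_of_mul_self_eq_zero hcentral
  exact ⟨fun _ =>
    eq_zero_of_isNilpotent_of_forall_mul_self_eq_zero (S := S.toSubsemigroup) hsq, hsq⟩

/-- Let `R` be a centrally essential ring and let `J` be a right ideal of `R` which is
semiprime as a ring. Then `J` is reduced (contains no nonzero nilpotent element); in
particular there is no nonzero `a ∈ J` with `a ^ 2 = 0`. -/
theorem stmt0 (R : Type*) [Ring R] (hR : IsCentrallyEssential R)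
    (J : AddSubgroup R) (hJright : ∀ x ∈ J, ∀ r : R, x * r ∈ J)
    (hJsemiprime : ∀ N : AddSubgroup R, (N : Set R) ⊆ (J : Set R) →
      (∀ x ∈ J, ∀ n ∈ N, x * n ∈ N) → (∀ x ∈ J, ∀ n ∈ N, n * x ∈ N) →
      (∀ m ∈ N, ∀ n ∈ N, m * n = 0) → N = ⊥) :
    (∀ a ∈ J, IsNilpotent a → a = 0) ∧ (∀ a ∈ J, a * a = 0 → a = 0) := by
  refine stmt0_general (S := { J with mul_mem' := fun hx _ => hJright _ hx _ }) hJsemiprime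
    fun a ha ha0 => ?_
  obtain ⟨c, -, hc, hc0⟩ := hR a ha0
  exact ⟨c, hJright a ha c, Set.center_subset_centralizer _ hc, hc0⟩
end

section
/- Every minimal non-nilpotent right ideal J of a centrally essential ring R is a two-sided ideal of R and is contained in the center C(R) of R. -/
/-!
Every nonzero element of a minimal right ideal `J` generates `J`. A nonzero `a ∈ J` has a nonzero
central multiple `a * c` with `c` central, so `J = (a * c) R` absorbs left multiplication and
contains each commutator `r * a - a * r`. The element `c` annihilates this commutator because `c`
and `a * c` commute with `r`. Were the commutator nonzero, it would generate `J`, so `c` would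
annihilate `J` and in particular `a`, contradicting `a * c ≠ 0`.
-/

open MulOpposite

lemma exists_eq_mul_of_isAtom {R : Type*} [Semiring R] {J : Submodule Rᵐᵒᵖ R} (hJ : IsAtom J)
    {a x : R} (ha : a ∈ J) (ha0 : a ≠ 0) (hx : x ∈ J) : ∃ s, x = a * s := by
  have hspan : Submodule.span Rᵐᵒᵖ {a} = J :=
    (hJ.le_iff_eq (mt Submodule.span_singleton_eq_bot.mp ha0)).mp
      ((Submodule.span_singleton_le_iff_mem a J).mpr ha)
  obtain ⟨s, hs⟩ := Submodule.mem_span_singleton.mp (hspan ▸ hx)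
  exact ⟨s.unop, hs.symm⟩

lemma mul_eq_zero_of_isAtom_of_mem_center {R : Type*} [Semiring R] {J : Submodule Rᵐᵒᵖ R}
    (hJ : IsAtom J) {c d x : R} (hc : c ∈ Set.center R) (hd : d ∈ J) (hd0 : d ≠ 0)
    (hdc : d * c = 0) (hx : x ∈ J) : x * c = 0 := by
  obtain ⟨s, rfl⟩ := exists_eq_mul_of_isAtom hJ hd hd0 hx
  rw [mul_assoc, Semigroup.mem_center_iff.mp hc s, ← mul_assoc, hdc, zero_mul]

lemma mul_mem_left_of_isAtom_of_mem_center {R : Type*} [Semiring R] {J : Submodule Rᵐᵒᵖ R}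
    (hJ : IsAtom J) {z x : R} (hz : z ∈ Set.center R) (hzJ : z ∈ J) (hz0 : z ≠ 0)
    (hx : x ∈ J) (r : R) : r * x ∈ J := by
  obtain ⟨s, rfl⟩ := exists_eq_mul_of_isAtom hJ hzJ hz0 hx
  rw [← mul_assoc, Semigroup.mem_center_iff.mp hz r, mul_assoc]
  exact J.smul_mem (op (r * s)) hzJ

lemma commutator_mul_eq_zero_of_commute {R : Type*} [NonUnitalRing R] {r a c : R}
    (hc : Commute r c) (hac : Commute r (a * c)) : (r * a - a * r) * c = 0 := by
  rw [sub_mul, sub_eq_zero]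
  calc
    r * a * c = r * (a * c) := mul_assoc r a c
    _ = a * c * r := hac.eq
    _ = a * (r * c) := by rw [mul_assoc, hc.eq]
    _ = a * r * c := (mul_assoc a r c).symm

lemma mem_center_of_isAtom_of_mul_mem_center {R : Type*} [Ring R] {J : Submodule Rᵐᵒᵖ R}
    (hJ : IsAtom J) {a c : R} (ha : a ∈ J) (hc : c ∈ Set.center R)
    (hac : a * c ∈ Set.center R) (hac0 : a * c ≠ 0) : a ∈ Set.center R := by
  refine Semigroup.mem_center_iff.mpr fun r => ?_
  by_contra hra
  have hleft : r * a ∈ J :=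
    mul_mem_left_of_isAtom_of_mem_center hJ hac (J.smul_mem (op c) ha) hac0 ha r
  have hcomm : r * a - a * r ∈ J := J.sub_mem hleft (J.smul_mem (op r) ha)
  have hcomm_mul : (r * a - a * r) * c = 0 :=
    commutator_mul_eq_zero_of_commute (Semigroup.mem_center_iff.mp hc r)
      (Semigroup.mem_center_iff.mp hac r)
  exact hac0 (mul_eq_zero_of_isAtom_of_mem_center hJ hc hcomm (sub_ne_zero.mpr hra) hcomm_mul ha)

theorem stmt2_general {R : Type*} [Ring R] (hR : IsCentrallyEssential R)
    {J : Submodule Rᵐᵒᵖ R} (hJ : IsAtom J) :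
    (∀ x ∈ J, ∀ r : R, r * x ∈ J) ∧ (J : Set R) ⊆ Set.center R := by
  have hcenter : (J : Set R) ⊆ Set.center R := by
    intro a ha
    rcases eq_or_ne a 0 with rfl | ha0
    · exact Set.zero_mem_center
    · obtain ⟨c, hc, hac, hac0⟩ := hR a ha0
      exact mem_center_of_isAtom_of_mul_mem_center hJ ha hc hac hac0
  refine ⟨fun x hx r => ?_, hcenter⟩
  rw [Semigroup.mem_center_iff.mp (hcenter hx) r]
  exact J.smul_mem (op r) hx

/-- The additive subgroup `J`, closed under right multiplication, as a right ideal of `R`; right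
ideals are encoded as `Rᵐᵒᵖ`-submodules of `R`, so that the minimal ones are the atoms. -/
def rightIdealOfMulMem {R : Type*} [Ring R] (J : AddSubgroup R)
    (hJ : ∀ x ∈ J, ∀ r : R, x * r ∈ J) : Submodule Rᵐᵒᵖ R where
  __ := J
  smul_mem' r x hx := hJ x hx r.unop

lemma isAtom_rightIdealOfMulMem {R : Type*} [Ring R] {J : AddSubgroup R}
    (hJ : ∀ x ∈ J, ∀ r : R, x * r ∈ J) (hJne : J ≠ ⊥)
    (hJmin : ∀ J' : AddSubgroup R, (∀ x ∈ J', ∀ r : R, x * r ∈ J') → J' ≤ J →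
      J' = ⊥ ∨ J' = J) :
    IsAtom (rightIdealOfMulMem J hJ) := by
  refine ⟨fun h => hJne (congrArg Submodule.toAddSubgroup h), fun I hI => ?_⟩
  apply Submodule.toAddSubgroup_injective
  refine (hJmin I.toAddSubgroup (fun x hx r => I.smul_mem (op r) hx) hI.le).resolve_right ?_
  exact fun h => hI.ne (Submodule.toAddSubgroup_injective h)

/-- Every minimal non-nilpotent right ideal `J` of a centrally essential ring `R` is a
two-sided ideal of `R` and is contained in the center `C(R)` of `R`. -/
theorem stmt2 (R : Type*) [Ring R] (hR : IsCentrallyEssential R)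
    (J : AddSubgroup R) (hJright : ∀ x ∈ J, ∀ r : R, x * r ∈ J)
    (hJne : J ≠ ⊥)
    (hJmin : ∀ J' : AddSubgroup R, (∀ x ∈ J', ∀ r : R, x * r ∈ J') → J' ≤ J →
      J' = ⊥ ∨ J' = J)
    (hJnonnilpotent : ∀ n : ℕ, 0 < n →
      ∃ f : Fin n → R, (∀ i, f i ∈ J) ∧ (List.ofFn f).prod ≠ 0) :
    (∀ x ∈ J, ∀ r : R, r * x ∈ J) ∧ (J : Set R) ⊆ Set.center R :=
  stmt2_general hR (isAtom_rightIdealOfMulMem hJright hJne hJmin)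
end

section
/- Let R be a centrally essential unital ring and let I be a minimal non-nilpotent right ideal of R. Then I = eR for a central idempotent e of R (so I is a two-sided ideal), and both the ring I (with operations inherited from R) and the quotient ring R/I are centrally essential rings. -/
/-- A subset `S` of a ring, regarded as a (not necessarily unital) ring with the inherited
operations, is centrally essential if it is commutative or for every element of `S` that is
not central in `S` there exist nonzero elements `x, y` of the center of `S` with `a * x = y`. -/
def SetIsCentrallyEssential (R : Type*) [Ring R] (S : Set R) : Prop :=
  (∀ x ∈ S, ∀ y ∈ S, x * y = y * x) ∨
    ∀ a ∈ S, (¬ ∀ x ∈ S, a * x = x * a) →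
      ∃ x ∈ S, ∃ y ∈ S, (∀ z ∈ S, x * z = z * x) ∧ (∀ z ∈ S, y * z = z * y) ∧
        x ≠ 0 ∧ y ≠ 0 ∧ a * x = y

/-!
A minimal right ideal `I` with `I² ≠ 0` has an element `a` with `aI ≠ 0`. By Schur's lemma left
multiplication by `a` is an automorphism of `I`, and the solution `e ∈ I` of `a * e = a` is an
idempotent acting as a left identity on `I`, so `I = eR`. If `x` is in `eR(1 - e)` and `c` and
`x * c` are central, then `x * c = e * (x * c) = (x * c) * e = (x * e) * c = 0`, so in a centrally
essential ring the Peirce components `eR(1 - e)` and `(1 - e)Re` vanish and `e` is central.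
Then `R = eR × (1 - e)R`, where `(1 - e)R` is `R/I`, and the central multiplier of an element with
nonzero component in one factor can be projected to that factor.
-/

section RightIdeal

variable {R : Type*} [Ring R]

/-- A right ideal, given as an additive subgroup closed under right multiplication, viewed as a
submodule of `R` over `Rᵐᵒᵖ`, so that the theory of simple modules applies to it. -/
def rightIdealOfAddSubgroup (I : AddSubgroup R) (hI : ∀ x ∈ I, ∀ r : R, x * r ∈ I) :
    Submodule Rᵐᵒᵖ R :=
  { I with smul_mem' := fun r x hx => hI x hx r.unop }

theorem isSimpleModule_rightIdealOfAddSubgroup {I : AddSubgroup R}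
    (hI : ∀ x ∈ I, ∀ r : R, x * r ∈ I) (hne : I ≠ ⊥)
    (hmin : ∀ J : AddSubgroup R, (∀ x ∈ J, ∀ r : R, x * r ∈ J) → J ≤ I → J = ⊥ ∨ J = I) :
    IsSimpleModule Rᵐᵒᵖ (rightIdealOfAddSubgroup I hI) := by
  refine isSimpleModule_iff_isAtom.mpr ⟨fun h => hne (congrArg Submodule.toAddSubgroup h), ?_⟩
  intro J hJ
  have hJ_right : ∀ x ∈ J.toAddSubgroup, ∀ r : R, x * r ∈ J.toAddSubgroup :=
    fun x hx r => J.smul_mem (MulOpposite.op r) hx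
  rcases hmin J.toAddSubgroup hJ_right hJ.le with hbot | htop
  · exact Submodule.toAddSubgroup_injective hbot
  · exact absurd (Submodule.toAddSubgroup_injective htop) hJ.ne

theorem exists_mem_forall_mul_eq_self_of_isSimpleModule {I : Submodule Rᵐᵒᵖ R}
    [IsSimpleModule Rᵐᵒᵖ I] {a b : R} (ha : a ∈ I) (hb : b ∈ I) (hab : a * b ≠ 0) :
    ∃ e ∈ I, ∀ x ∈ I, e * x = x := by
  have mul_mem {x : R} (hx : x ∈ I) (r : R) : x * r ∈ I := I.smul_mem (MulOpposite.op r) hx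
  let mulLeft : I →ₗ[Rᵐᵒᵖ] I := (LinearMap.mulLeft Rᵐᵒᵖ a).restrict fun r _ => mul_mem ha r
  have mulLeft_ne_zero : mulLeft ≠ 0 := fun h =>
    hab (congrArg Subtype.val (LinearMap.congr_fun h ⟨b, hb⟩))
  obtain ⟨mulLeft_injective, mulLeft_surjective⟩ := LinearMap.bijective_of_ne_zero mulLeft_ne_zero
  obtain ⟨⟨e, he⟩, hmul⟩ := mulLeft_surjective ⟨a, ha⟩
  have hae : a * e = a := congrArg Subtype.val hmul
  refine ⟨e, he, fun x hx => ?_⟩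
  have hmul_eq : mulLeft ⟨e * x, mul_mem he x⟩ = mulLeft ⟨x, hx⟩ :=
    Subtype.ext (show a * (e * x) = a * x by rw [← mul_assoc, hae])
  exact congrArg Subtype.val (mulLeft_injective hmul_eq)

end RightIdeal

namespace IsCentrallyEssential

variable {R : Type*} [Ring R] {a e : R}

theorem eq_zero_of_mul_eq_self_of_mul_eq_zero (hR : IsCentrallyEssential R) (hea : e * a = a)
    (hae : a * e = 0) : a = 0 := by
  by_contra ha
  obtain ⟨c, hc, hac, hne⟩ := hR a ha
  apply hne
  calc a * c = e * (a * c) := by rw [← mul_assoc, hea]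
    _ = a * c * e := Semigroup.mem_center_iff.mp hac e
    _ = a * e * c := by rw [mul_assoc, ← Semigroup.mem_center_iff.mp hc e, mul_assoc]
    _ = 0 := by rw [hae, zero_mul]

theorem mem_center_of_isIdempotentElem (hR : IsCentrallyEssential R) (he : IsIdempotentElem e) :
    e ∈ Set.center R := by
  have peirce_eq_zero {f : R} (hf : IsIdempotentElem f) (x : R) : f * x * (1 - f) = 0 :=
    hR.eq_zero_of_mul_eq_self_of_mul_eq_zero (e := f) (by simp only [← mul_assoc, hf.eq])
      (by rw [mul_assoc, hf.one_sub_mul_self, mul_zero])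
  refine Semigroup.mem_center_iff.mpr fun x => ?_
  have hright : e * x = e * x * e := by
    simpa only [mul_sub, mul_one, sub_eq_zero] using peirce_eq_zero he x
  have hleft : x * e = e * x * e := by
    simpa only [sub_sub_cancel, sub_mul, one_mul, sub_eq_zero] using peirce_eq_zero he.one_sub x
  exact hleft.trans hright.symm

theorem exists_mem_center_mul_eq_self (hR : IsCentrallyEssential R) (he : IsIdempotentElem e)
    (hea : e * a ≠ 0) :
    ∃ c ∈ Set.center R, e * c = c ∧ a * c ∈ Set.center R ∧ a * c ≠ 0 := by
  have he_center := hR.mem_center_of_isIdempotentElem he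
  obtain ⟨c, hc, hac, hne⟩ := hR (e * a) hea
  have hmul : e * a * c = a * (e * c) := by
    rw [← Semigroup.mem_center_iff.mp he_center a, mul_assoc]
  rw [hmul] at hac hne
  exact ⟨e * c, Set.mul_mem_center he_center hc, by rw [← mul_assoc, he.eq], hac, hne⟩

theorem setIsCentrallyEssential_range_mul_left (hR : IsCentrallyEssential R)
    (he : IsIdempotentElem e) : SetIsCentrallyEssential R (Set.range fun r : R => e * r) := by
  refine Or.inr ?_
  rintro _ ⟨r, rfl⟩ hnot_central
  have her : e * (e * r) ≠ 0 := by
    rw [← mul_assoc, he.eq]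
    intro h
    exact hnot_central fun x _ => by simp only [h, zero_mul, mul_zero]
  obtain ⟨c, hc, hec, hac, hne⟩ := hR.exists_mem_center_mul_eq_self he her
  refine ⟨c, ⟨c, hec⟩, e * r * c, ⟨r * c, (mul_assoc e r c).symm⟩, ?_, ?_, ?_, hne, rfl⟩
  · exact fun z _ => (Semigroup.mem_center_iff.mp hc z).symm
  · exact fun z _ => (Semigroup.mem_center_iff.mp hac z).symm
  · exact right_ne_zero_of_mul hne

theorem exists_mem_center_mul_notMem_range_mul_left (hR : IsCentrallyEssential R)
    (he : IsIdempotentElem e) (ha : a ∉ Set.range fun r : R => e * r) :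
    ∃ c ∈ Set.center R, a * c ∈ Set.center R ∧ a * c ∉ Set.range fun r : R => e * r := by
  have hcompl : (1 - e) * a ≠ 0 := fun h =>
    ha ⟨a, by rwa [sub_mul, one_mul, sub_eq_zero, eq_comm] at h⟩
  obtain ⟨c, hc, hec, hac, hne⟩ := hR.exists_mem_center_mul_eq_self he.one_sub hcompl
  refine ⟨c, hc, hac, ?_⟩
  rintro ⟨r, hr : e * r = a * c⟩
  apply hne
  calc a * c = a * ((1 - e) * c) := by rw [hec]
    _ = (1 - e) * (a * c) := by
      have hcenter := hR.mem_center_of_isIdempotentElem he.one_sub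
      rw [← mul_assoc, Semigroup.mem_center_iff.mp hcenter a, mul_assoc]
    _ = 0 := by rw [← hr, ← mul_assoc, he.one_sub_mul_self, zero_mul]

end IsCentrallyEssential

/-- Let `R` be a centrally essential unital ring and let `I` be a minimal non-nilpotent right
ideal of `R`. Then `I = eR` for a central idempotent `e` (so `I` is a two-sided ideal), and
both the ring `I` and the quotient ring `R/I` are centrally essential rings.  Central
essentiality of the quotient ring `R/I` is expressed via representatives. -/
theorem stmt5 (R : Type*) [Ring R] (hR : IsCentrallyEssential R)
    (I : AddSubgroup R) (hIright : ∀ x ∈ I, ∀ r : R, x * r ∈ I)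
    (hIne : I ≠ ⊥)
    (hImin : ∀ I' : AddSubgroup R, (∀ x ∈ I', ∀ r : R, x * r ∈ I') → I' ≤ I →
      I' = ⊥ ∨ I' = I)
    (hInonnilpotent : ∀ n : ℕ, 0 < n →
      ∃ f : Fin n → R, (∀ i, f i ∈ I) ∧ (List.ofFn f).prod ≠ 0) :
    (∃ e : R, e ∈ Set.center R ∧ e * e = e ∧ (I : Set R) = Set.range (fun r : R => e * r)) ∧
    (∀ x ∈ I, ∀ r : R, r * x ∈ I) ∧
    SetIsCentrallyEssential R (I : Set R) ∧
    (∀ a : R, a ∉ I → ∃ c : R, (∀ x : R, c * x - x * c ∈ I) ∧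
      (∀ x : R, a * c * x - x * (a * c) ∈ I) ∧ a * c ∉ I) := by
  obtain ⟨f, hf, hprod⟩ := hInonnilpotent 2 two_pos
  have hmul_ne_zero : f 0 * f 1 ≠ 0 := by simpa [List.ofFn_succ] using hprod
  have := isSimpleModule_rightIdealOfAddSubgroup hIright hIne hImin
  obtain ⟨e, heI, he_mul⟩ : ∃ e ∈ I, ∀ x ∈ I, e * x = x :=
    exists_mem_forall_mul_eq_self_of_isSimpleModule
      (I := rightIdealOfAddSubgroup I hIright) (hf 0) (hf 1) hmul_ne_zero
  have he : IsIdempotentElem e := he_mul e heI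
  have he_center := hR.mem_center_of_isIdempotentElem he
  have hI_eq : (I : Set R) = Set.range (fun r : R => e * r) :=
    Set.Subset.antisymm (fun x hx => ⟨x, he_mul x hx⟩)
      (Set.range_subset_iff.mpr (hIright e heI))
  refine ⟨⟨e, he_center, he, hI_eq⟩, fun x hx r => ?_, ?_, fun a ha => ?_⟩
  · rw [← he_mul x hx, ← mul_assoc, Semigroup.mem_center_iff.mp he_center r, mul_assoc]
    exact hIright e heI _
  · exact hI_eq ▸ hR.setIsCentrallyEssential_range_mul_left he
  · rw [← SetLike.mem_coe, hI_eq] at ha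
    obtain ⟨c, hc, hac, hnotMem⟩ := hR.exists_mem_center_mul_notMem_range_mul_left he ha
    have commutator_mem {z : R} (hz : z ∈ Set.center R) (x : R) : z * x - x * z ∈ I := by
      rw [Semigroup.mem_center_iff.mp hz x, sub_self]
      exact I.zero_mem
    exact ⟨c, commutator_mem hc, commutator_mem hac, by rwa [← SetLike.mem_coe, hI_eq]⟩
end

section
/- Let R be an invariant centrally essential unital ring, i.e., every right ideal of R and every left ideal of R is a two-sided ideal. Then every non-nilpotent minimal ideal I of R is a field: I has a multiplicative identity, is commutative, and every nonzero element of I has a multiplicative inverse in I. -/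
/-!
A central element `c` of `R` acts on a minimal ideal `I` by a bimodule endomorphism `x ↦ c * x`, so
by Schur's lemma this map is zero or bijective on `I`. When `I² ≠ 0`, the left annihilator of `I`
meets `I` trivially, hence the nonzero central elements of `I` act bijectively.

If `x ∈ I` is nonzero, central essentiality gives a central `c` with `x * c` central and nonzero.
Then `c * (s * x) = c * (x * s)` for all `s`, so `s * x` and `x * s` have the same image under
multiplication by `x * c`, which is injective on `I`. Thus `I` is central, and all its nonzero
elements act bijectively on it, which yields the identity and the inverses.
-/

theorem exists_identity_of_surjOn_mul_left {M : Type*} [Semigroup M] {s : Set M} {w : M}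
    (hwc : w ∈ Set.center M) (hw : w ∈ s) (hsurj : Set.SurjOn (w * ·) s s) :
    ∃ e ∈ s, ∀ x ∈ s, e * x = x ∧ x * e = x := by
  obtain ⟨e, he, hwe : w * e = w⟩ := hsurj hw
  refine ⟨e, he, fun x hx => ?_⟩
  obtain ⟨v, -, rfl : w * v = x⟩ := hsurj hx
  constructor
  · rw [← mul_assoc, ← hwc.comm e, hwe]
  · rw [hwc.comm v, mul_assoc, hwe]

section NonUnitalRing

variable {R : Type*} [NonUnitalRing R]

/-- An additive subgroup closed under multiplication by `R` on both sides, as a `TwoSidedIdeal`,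
so that minimal ideals are the atoms of Mathlib's lattice of two-sided ideals. -/
def twoSidedIdealOfAddSubgroup (K : AddSubgroup R)
    (hK : ∀ x ∈ K, ∀ r : R, x * r ∈ K ∧ r * x ∈ K) : TwoSidedIdeal R :=
  .mk' K K.zero_mem K.add_mem K.neg_mem (fun hx => (hK _ hx _).2) (fun hx => (hK _ hx _).1)

@[simp]
theorem mem_twoSidedIdealOfAddSubgroup {K : AddSubgroup R}
    {hK : ∀ x ∈ K, ∀ r : R, x * r ∈ K ∧ r * x ∈ K} {x : R} :
    x ∈ twoSidedIdealOfAddSubgroup K hK ↔ x ∈ K :=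
  TwoSidedIdeal.mem_mk' ..

theorem isAtom_twoSidedIdealOfAddSubgroup {K : AddSubgroup R}
    (hK : ∀ x ∈ K, ∀ r : R, x * r ∈ K ∧ r * x ∈ K) (hne : K ≠ ⊥)
    (hmin : ∀ K' : AddSubgroup R, (∀ x ∈ K', ∀ r : R, x * r ∈ K' ∧ r * x ∈ K') → K' ≤ K →
      K' = ⊥ ∨ K' = K) :
    IsAtom (twoSidedIdealOfAddSubgroup K hK) := by
  refine ⟨fun hbot => hne ?_, fun J hJ => ?_⟩
  · ext x
    rw [← mem_twoSidedIdealOfAddSubgroup (hK := hK), hbot, TwoSidedIdeal.mem_bot,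
      AddSubgroup.mem_bot]
  · have hJK : AddSubgroup.ofClass J ≤ K := fun x hx =>
      mem_twoSidedIdealOfAddSubgroup.mp (hJ.le hx)
    rcases hmin (.ofClass J) (fun x hx r => ⟨J.mul_mem_right x r hx, J.mul_mem_left r x hx⟩) hJK
      with hbot | hJ_eq
    · ext x
      rw [TwoSidedIdeal.mem_bot, ← AddSubgroup.mem_bot, ← hbot]
      rfl
    · refine absurd (fun x hx => ?_) hJ.not_ge
      rwa [mem_twoSidedIdealOfAddSubgroup, ← hJ_eq] at hx

/-- The left annihilator `{x | x * I = 0}` of a two-sided ideal `I`, itself a two-sided ideal. A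
minimal ideal `I` lies in it if `I² = 0` and meets it trivially otherwise. -/
def leftAnnihilator (I : TwoSidedIdeal R) : TwoSidedIdeal R :=
  .mk' {x | ∀ y ∈ I, x * y = 0}
    (fun y _ => zero_mul y)
    (fun hx hx' y hy => by rw [add_mul, hx y hy, hx' y hy, add_zero])
    (fun hx y hy => by rw [neg_mul, hx y hy, neg_zero])
    (fun hx y hy => by rw [mul_assoc, hx y hy, mul_zero])
    (fun hx y hy => by rw [mul_assoc, hx _ (I.mul_mem_left _ y hy)])

theorem mem_leftAnnihilator {I : TwoSidedIdeal R} {x : R} :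
    x ∈ leftAnnihilator I ↔ ∀ y ∈ I, x * y = 0 :=
  TwoSidedIdeal.mem_mk' ..

/-- The kernel `{x | c * x = 0}` of multiplication by a central element `c`, as a two-sided
ideal: the kernel in Schur's lemma is its intersection with a minimal ideal. -/
def centralMulKer {c : R} (hc : c ∈ Set.center R) : TwoSidedIdeal R :=
  twoSidedIdealOfAddSubgroup (AddMonoidHom.mulLeft c).ker fun x hx r => by
    replace hx : c * x = 0 := hx
    constructor
    · change c * (x * r) = 0
      rw [← mul_assoc, hx, zero_mul]
    · change c * (r * x) = 0
      rw [hc.left_comm, hx, mul_zero]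

theorem mem_centralMulKer {c : R} (hc : c ∈ Set.center R) {x : R} :
    x ∈ centralMulKer hc ↔ c * x = 0 :=
  mem_twoSidedIdealOfAddSubgroup

/-- The image `c * I` of a two-sided ideal `I` under multiplication by a central element `c`, as a
two-sided ideal: the image in Schur's lemma. -/
def centralMulImage {c : R} (hc : c ∈ Set.center R) (I : TwoSidedIdeal R) : TwoSidedIdeal R :=
  twoSidedIdealOfAddSubgroup ((AddSubgroup.ofClass I).map (AddMonoidHom.mulLeft c)) <| by
    rintro _ ⟨x, hx, rfl⟩ r
    exact ⟨⟨x * r, I.mul_mem_right x r hx, (mul_assoc c x r).symm⟩,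
      ⟨r * x, I.mul_mem_left r x hx, hc.left_comm r x⟩⟩

theorem mem_centralMulImage {c : R} (hc : c ∈ Set.center R) {I : TwoSidedIdeal R} {y : R} :
    y ∈ centralMulImage hc I ↔ ∃ x ∈ I, c * x = y :=
  mem_twoSidedIdealOfAddSubgroup

variable {I : TwoSidedIdeal R}

theorem bijOn_mul_left_of_isAtom (hI : IsAtom I) {c : R} (hc : c ∈ Set.center R)
    (hcI : ∃ x ∈ I, c * x ≠ 0) : Set.BijOn (c * ·) I I := by
  obtain ⟨x₀, hx₀, hcx₀⟩ := hcI
  have hker : Disjoint I (centralMulKer hc) := hI.not_le_iff_disjoint.mp fun hle =>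
    hcx₀ ((mem_centralMulKer hc).mp (hle hx₀))
  have himage : centralMulImage hc I = I := by
    refine (hI.le_iff_eq fun hbot => hcx₀ ?_).mp fun y hy => ?_
    · rw [← TwoSidedIdeal.mem_bot, ← hbot]
      exact (mem_centralMulImage hc).mpr ⟨x₀, hx₀, rfl⟩
    · obtain ⟨x, hx, rfl⟩ := (mem_centralMulImage hc).mp hy
      exact I.mul_mem_left c x hx
  refine ⟨fun x hx => I.mul_mem_left c x hx, fun x hx y hy hxy => ?_, fun y hy => ?_⟩
  · rw [← sub_eq_zero, ← TwoSidedIdeal.mem_bot]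
    refine hker.le_bot ((TwoSidedIdeal.mem_inf R).mpr ⟨I.sub_mem hx hy, ?_⟩)
    rw [mem_centralMulKer, mul_sub, sub_eq_zero]
    exact hxy
  · rw [← himage] at hy
    exact (mem_centralMulImage hc).mp hy

theorem exists_mul_ne_zero_of_isAtom (hI : IsAtom I) (hsq : ∃ x ∈ I, ∃ y ∈ I, x * y ≠ 0) {x : R}
    (hx : x ∈ I) (hx0 : x ≠ 0) : ∃ y ∈ I, x * y ≠ 0 := by
  obtain ⟨a, ha, b, hb, hab⟩ := hsq
  have hdisj : Disjoint I (leftAnnihilator I) := hI.not_le_iff_disjoint.mp fun hle =>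
    hab (mem_leftAnnihilator.mp (hle ha) b hb)
  by_contra! hann
  exact hx0 <| (TwoSidedIdeal.mem_bot R).mp <| hdisj.le_bot <|
    (TwoSidedIdeal.mem_inf R).mpr ⟨hx, mem_leftAnnihilator.mpr hann⟩

theorem bijOn_mul_left_of_mem_center_of_mem (hI : IsAtom I) (hsq : ∃ x ∈ I, ∃ y ∈ I, x * y ≠ 0)
    {w : R} (hwc : w ∈ Set.center R) (hw : w ∈ I) (hw0 : w ≠ 0) : Set.BijOn (w * ·) I I :=
  bijOn_mul_left_of_isAtom hI hwc (exists_mul_ne_zero_of_isAtom hI hsq hw hw0)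

end NonUnitalRing

section Ring

variable {R : Type*} [Ring R] {I : TwoSidedIdeal R}

theorem IsCentrallyEssential.mem_center_of_mem_isAtom (hR : IsCentrallyEssential R)
    (hI : IsAtom I) (hsq : ∃ x ∈ I, ∃ y ∈ I, x * y ≠ 0) {x : R} (hx : x ∈ I) :
    x ∈ Set.center R := by
  rcases eq_or_ne x 0 with rfl | hx0
  · exact Set.zero_mem_center
  obtain ⟨c, hc, hxc, hxc0⟩ := hR x hx0
  have hinj := (bijOn_mul_left_of_mem_center_of_mem hI hsq hxc (I.mul_mem_right x c hx) hxc0).injOn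
  refine Semigroup.mem_center_iff.mpr fun s =>
    hinj (I.mul_mem_left s x hx) (I.mul_mem_right x s hx) ?_
  have hcs : c * (s * x) = c * (x * s) :=
    calc c * (s * x) = s * (x * c) := by rw [hc.comm, mul_assoc]
      _ = x * c * s := (hxc.comm s).symm
      _ = c * (x * s) := by rw [← hc.comm x, mul_assoc]
  change x * c * (s * x) = x * c * (x * s)
  rw [mul_assoc, hcs, mul_assoc]

theorem stmt7_general (hR : IsCentrallyEssential R) (hI : IsAtom I)
    (hsq : ∃ x ∈ I, ∃ y ∈ I, x * y ≠ 0) :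
    ∃ e ∈ I, (∀ x ∈ I, e * x = x ∧ x * e = x) ∧
      (∀ x ∈ I, ∀ y ∈ I, x * y = y * x) ∧
      (∀ x ∈ I, x ≠ 0 → ∃ y ∈ I, x * y = e) := by
  have hcenter : ∀ x ∈ I, x ∈ Set.center R := fun x hx => hR.mem_center_of_mem_isAtom hI hsq hx
  have hbij : ∀ x ∈ I, x ≠ 0 → Set.BijOn (x * ·) I I := fun x hx hx0 =>
    bijOn_mul_left_of_mem_center_of_mem hI hsq (hcenter x hx) hx hx0
  obtain ⟨w, hw, y, -, hwy⟩ := hsq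
  obtain ⟨e, he, hid⟩ := exists_identity_of_surjOn_mul_left (hcenter w hw) hw
    (hbij w hw (left_ne_zero_of_mul hwy)).surjOn
  exact ⟨e, he, hid, fun x hx y _ => (hcenter x hx).comm y,
    fun x hx hx0 => (hbij x hx hx0).surjOn he⟩

end Ring

/-- Let `R` be an invariant centrally essential unital ring (every right ideal and every left
ideal of `R` is two-sided).  Then every non-nilpotent minimal (two-sided) ideal `I` of `R` is
a field: `I` has a multiplicative identity, is commutative, and every nonzero element of `I`
has a multiplicative inverse in `I`. -/
theorem stmt7 (R : Type*) [Ring R] (hR : IsCentrallyEssential R)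
    (hRightInv : ∀ K : AddSubgroup R, (∀ x ∈ K, ∀ r : R, x * r ∈ K) →
      ∀ x ∈ K, ∀ r : R, r * x ∈ K)
    (hLeftInv : ∀ K : AddSubgroup R, (∀ x ∈ K, ∀ r : R, r * x ∈ K) →
      ∀ x ∈ K, ∀ r : R, x * r ∈ K)
    (I : AddSubgroup R) (hItwoSided : ∀ x ∈ I, ∀ r : R, x * r ∈ I ∧ r * x ∈ I)
    (hIne : I ≠ ⊥)
    (hImin : ∀ I' : AddSubgroup R, (∀ x ∈ I', ∀ r : R, x * r ∈ I' ∧ r * x ∈ I') → I' ≤ I →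
      I' = ⊥ ∨ I' = I)
    (hInonnilpotent : ∀ n : ℕ, 0 < n →
      ∃ f : Fin n → R, (∀ i, f i ∈ I) ∧ (List.ofFn f).prod ≠ 0) :
    ∃ e ∈ I, (∀ x ∈ I, e * x = x ∧ x * e = x) ∧
      (∀ x ∈ I, ∀ y ∈ I, x * y = y * x) ∧
      (∀ x ∈ I, x ≠ 0 → ∃ y ∈ I, x * y = e) := by
  obtain ⟨f, hf, hprod⟩ := hInonnilpotent 2 two_pos
  simpa using stmt7_general hR (isAtom_twoSidedIdealOfAddSubgroup hItwoSided hIne hImin)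
    ⟨f 0, by simp [hf], f 1, by simp [hf], by simpa using hprod⟩
end

section
/- Let A be a commutative unital ring, let a, b be invertible elements of A, and let R = (a,b,A) be the quaternion algebra over A. Then R is a centrally essential ring if and only if the annihilator Ann_A(2) = {t ∈ A : 2t = 0} is an essential ideal of A. -/
open Quaternion

/-- The annihilator ideal `Ann_A(2) = {t ∈ A : 2t = 0}` of `2` in a commutative ring `A`. -/
def annTwo (A : Type*) [CommRing A] : Ideal A where
  carrier := {t | 2 * t = 0}
  add_mem' := by
    intro x y hx hy
    simp only [Set.mem_setOf_eq] at *
    rw [mul_add, hx, hy, add_zero]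
  zero_mem' := by simp
  smul_mem' := by
    intro c x hx
    simp only [Set.mem_setOf_eq, smul_eq_mul] at *
    rw [mul_left_comm, hx, mul_zero]

/-!
An element of `ℍ[A,a,b]` is central as soon as `2` kills its imaginary coordinates, so the center
contains the intersection of the preimages of `Ann_A(2)` under the three imaginary coordinate maps;
preimages and intersections of essential submodules are essential. Conversely, if `t ≠ 0` and `c` is
a central element such that `(t i) c` is central and nonzero, then `2` kills `(t i) c`, whose
coordinates are multiples of `t`.
-/

/-- Essential submodules (also called large submodules): those meeting every nonzero submodule
nontrivially. For ideals of a commutative ring these are the essential ideals. -/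
def IsEssential {R M : Type*} [Semiring R] [AddCommMonoid M] [Module R M]
    (N : Submodule R M) : Prop :=
  ∀ P : Submodule R M, P ≠ ⊥ → N ⊓ P ≠ ⊥

section Semiring

variable {R M M' : Type*} [Semiring R] [AddCommMonoid M] [Module R M] [AddCommMonoid M']
  [Module R M'] {N P : Submodule R M}

namespace IsEssential

theorem mono (hN : IsEssential N) (hNP : N ≤ P) : IsEssential P := fun Q hQ =>
  ne_bot_of_le_ne_bot (hN Q hQ) (inf_le_inf_right Q hNP)

theorem inf (hN : IsEssential N) (hP : IsEssential P) : IsEssential (N ⊓ P) := fun Q hQ => by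
  rw [inf_assoc]
  exact hN _ (hP Q hQ)

theorem comap (hN : IsEssential N) (f : M' →ₗ[R] M) : IsEssential (N.comap f) := by
  intro Q hQ
  by_cases hQf : Q ≤ LinearMap.ker f
  · rwa [inf_eq_right.2 (hQf.trans (Submodule.comap_mono bot_le))]
  · have hmap : N ⊓ Q.map f ≠ ⊥ := hN _ (mt LinearMap.le_ker_iff_map.2 hQf)
    rw [inf_comm, Submodule.map_inf_eq_map_inf_comap, inf_comm] at hmap
    exact fun h => hmap (by rw [h, Submodule.map_bot])

end IsEssential

theorem isEssential_iff_exists_smul_mem :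
    IsEssential N ↔ ∀ x : M, x ≠ 0 → ∃ r : R, r • x ∈ N ∧ r • x ≠ 0 := by
  constructor
  · intro hN x hx
    obtain ⟨y, ⟨hyN, hyx⟩, hy⟩ :=
      (Submodule.ne_bot_iff _).1 (hN _ (mt Submodule.span_singleton_eq_bot.1 hx))
    obtain ⟨r, rfl⟩ := Submodule.mem_span_singleton.1 hyx
    exact ⟨r, hyN, hy⟩
  · intro h P hP
    obtain ⟨x, hxP, hx⟩ := (Submodule.ne_bot_iff _).1 hP
    obtain ⟨r, hrN, hr⟩ := h x hx
    exact (Submodule.ne_bot_iff _).2 ⟨r • x, ⟨hrN, P.smul_mem r hxP⟩, hr⟩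

end Semiring

theorem IsCentrallyEssential.of_isEssential_center {A R : Type*} [CommSemiring A] [Ring R]
    [Algebra A R] (h : IsEssential (Subalgebra.center A R).toSubmodule) :
    IsCentrallyEssential R := by
  intro x hx
  obtain ⟨r, hr_mem, hr⟩ := isEssential_iff_exists_smul_mem.1 h x hx
  have hmul : x * algebraMap A R r = r • x := by rw [← Algebra.commutes, ← Algebra.smul_def]
  refine ⟨algebraMap A R r, (Subalgebra.center A R).algebraMap_mem r, ?_, ?_⟩ <;> rw [hmul]
  exacts [hr_mem, hr]

theorem exists_mul_ne_zero_of_smul_smul_eq_zero {A M : Type*} [CommSemiring A] [AddCommMonoid M]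
    [Module A M] [Module.Projective A M] {s t : A} {m : M} (hm : t • m ≠ 0)
    (hs : s • t • m = 0) : ∃ r : A, s * (r * t) = 0 ∧ r * t ≠ 0 := by
  obtain ⟨φ, hφ⟩ := not_forall.1 (mt (Module.forall_dual_apply_eq_zero_iff A (t • m)).1 hm)
  have hφt : φ (t • m) = φ m * t := by rw [map_smul, smul_eq_mul, mul_comm]
  refine ⟨φ m, ?_, hφt ▸ hφ⟩
  rw [← hφt, ← smul_eq_mul, ← map_smul, hs, map_zero]

section QuaternionAlgebra

variable {A : Type*} [CommRing A] {a b : A}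

theorem mem_center_quaternionAlgebra_iff {x : ℍ[A,a,b]} :
    x ∈ Set.center ℍ[A,a,b] ↔
      2 * x.imI = 0 ∧ 2 * x.imJ = 0 ∧ a * (2 * x.imK) = 0 ∧ b * (2 * x.imK) = 0 := by
  rw [Semigroup.mem_center_iff]
  constructor
  · intro h
    have hi := h ⟨0, 1, 0, 0⟩
    have hj := h ⟨0, 0, 1, 0⟩
    simp only [QuaternionAlgebra.ext_iff, QuaternionAlgebra.re_mul, QuaternionAlgebra.imI_mul,
      QuaternionAlgebra.imJ_mul, QuaternionAlgebra.imK_mul] at hi hj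
    refine ⟨?_, ?_, ?_, ?_⟩
    · linear_combination -hj.2.2.2
    · linear_combination hi.2.2.2
    · linear_combination hi.2.2.1
    · linear_combination -hj.2.1
  · rintro ⟨hI, hJ, haK, hbK⟩ y
    ext <;> simp only [QuaternionAlgebra.re_mul, QuaternionAlgebra.imI_mul,
      QuaternionAlgebra.imJ_mul, QuaternionAlgebra.imK_mul]
    · ring
    · linear_combination b * y.imK * hJ - y.imJ * hbK
    · linear_combination y.imI * haK - a * y.imK * hI
    · linear_combination y.imI * hJ - y.imJ * hI

theorem two_smul_smul_i_mul_eq_zero {t : A} {c : ℍ[A,a,b]} (hc : c ∈ Set.center ℍ[A,a,b])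
    (htc : t • ((⟨0, 1, 0, 0⟩ : ℍ[A,a,b]) * c) ∈ Set.center ℍ[A,a,b]) :
    (2 : A) • t • ((⟨0, 1, 0, 0⟩ : ℍ[A,a,b]) * c) = 0 := by
  obtain ⟨hI, hJ, haK, -⟩ := mem_center_quaternionAlgebra_iff.1 hc
  have htI := (mem_center_quaternionAlgebra_iff.1 htc).1
  ext <;> simp only [QuaternionAlgebra.re_smul, QuaternionAlgebra.imI_smul,
    QuaternionAlgebra.imJ_smul, QuaternionAlgebra.imK_smul, QuaternionAlgebra.re_mul,
    QuaternionAlgebra.imI_mul, QuaternionAlgebra.imJ_mul, QuaternionAlgebra.imK_mul,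
    QuaternionAlgebra.re_zero, QuaternionAlgebra.imI_zero, QuaternionAlgebra.imJ_zero,
    QuaternionAlgebra.imK_zero, smul_eq_mul] at htI ⊢
  · linear_combination a * t * hI
  · exact htI
  · linear_combination t * haK
  · linear_combination t * hJ

theorem IsCentrallyEssential.isEssential_annTwo (h : IsCentrallyEssential ℍ[A,a,b]) :
    IsEssential (annTwo A) := by
  refine isEssential_iff_exists_smul_mem.2 fun t ht => ?_
  have hti : t • (⟨0, 1, 0, 0⟩ : ℍ[A,a,b]) ≠ 0 := fun h0 =>
    ht (by simpa using congrArg QuaternionAlgebra.imI h0)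
  obtain ⟨c, hc, htc, htc_ne⟩ := h _ hti
  rw [smul_mul_assoc] at htc htc_ne
  exact exists_mul_ne_zero_of_smul_smul_eq_zero htc_ne (two_smul_smul_i_mul_eq_zero hc htc)

theorem IsEssential.center_quaternionAlgebra (h : IsEssential (annTwo A)) :
    IsEssential (Subalgebra.center A ℍ[A,a,b]).toSubmodule := by
  have hIJK := ((h.comap (QuaternionAlgebra.imIₗ a 0 b)).inf
    (h.comap (QuaternionAlgebra.imJₗ a 0 b))).inf (h.comap (QuaternionAlgebra.imKₗ a 0 b))
  refine hIJK.mono ?_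
  rintro x ⟨⟨hI : 2 * x.imI = 0, hJ : 2 * x.imJ = 0⟩, hK : 2 * x.imK = 0⟩
  exact mem_center_quaternionAlgebra_iff.2 ⟨hI, hJ, by rw [hK, mul_zero], by rw [hK, mul_zero]⟩

end QuaternionAlgebra

theorem stmt9_general (A : Type*) [CommRing A] (a b : A) :
    IsCentrallyEssential ℍ[A,a,b] ↔ ∀ J : Ideal A, J ≠ ⊥ → annTwo A ⊓ J ≠ ⊥ :=
  ⟨fun h => h.isEssential_annTwo, fun h =>
    .of_isEssential_center (IsEssential.center_quaternionAlgebra (A := A) h)⟩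

/-- Let `A` be a commutative unital ring and `a, b` invertible elements of `A`.
The quaternion algebra `(a,b,A)` is centrally essential if and only if `Ann_A(2)` is an
essential ideal of `A`. -/
theorem stmt9 (A : Type*) [CommRing A] (a b : A) (ha : IsUnit a) (hb : IsUnit b) :
    IsCentrallyEssential ℍ[A, a, b] ↔
      ∀ J : Ideal A, J ≠ ⊥ → annTwo A ⊓ J ≠ ⊥ :=
  stmt9_general A a b
end

section
/- Let R be a commutative integral domain of characteristic 0 and let G be any group. Then the group ring RG is right nonsingular, i.e., every element of RG whose right annihilator is an essential right ideal of RG is zero. -/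
/-!
A ring with an involution for which `star x * x = 0` forces `x = 0` is right nonsingular: if `x` is
singular and nonzero, some `w = star x * t ≠ 0` is killed by `x`, and then `star w * w = 0`.  Over
`ℂ` the involution `∑ a_g g ↦ ∑ conj(a_g) g⁻¹` of the group ring has this property, since the
coefficient of `star x * x` at `1` is `∑ |a_g|²`.

The case of a domain `R` is reduced to `ℂ` through its fraction field `K`.  The coefficients of a
single element of `K[G]` generate a countable field, which embeds into `ℂ`.  Singularity passes
along these extensions of coefficients because a larger field is free over a smaller one: an element
of the larger group ring is a finite family of elements of the smaller one, and finitely many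
elements can be moved into an essential right ideal by one common right multiplier.
-/

open MonoidAlgebra

section RightSingular

variable {S : Type*} [Ring S]

/-- An element `x` of a ring is right singular if its right annihilator is an essential right ideal;
it suffices to test this on the principal right ideals `y * S`, which is the form taken as the
definition. -/
def IsRightSingular (x : S) : Prop :=
  ∀ y : S, y ≠ 0 → ∃ t, y * t ≠ 0 ∧ x * (y * t) = 0

variable (S) in
/-- A ring is right nonsingular if its right singular ideal is zero. -/
def IsRightNonsingular : Prop :=
  ∀ x : S, IsRightSingular x → x = 0

theorem isRightSingular_iff_forall_addSubgroup {x : S} :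
    IsRightSingular x ↔ ∀ J : AddSubgroup S, (∀ t ∈ J, ∀ s : S, t * s ∈ J) → J ≠ ⊥ →
      ∃ t ∈ J, t ≠ 0 ∧ x * t = 0 := by
  refine ⟨fun hx J hJ hJ0 ↦ ?_, fun hx y hy ↦ ?_⟩
  · obtain ⟨⟨y, hyJ⟩, hy⟩ := J.ne_bot_iff_exists_ne_zero.mp hJ0
    obtain ⟨t, hyt, hxyt⟩ := hx y fun h ↦ hy (Subtype.ext h)
    exact ⟨y * t, hJ y hyJ t, hyt, hxyt⟩
  · have hy_mem : y ∈ (AddMonoidHom.mulLeft y).range := ⟨1, mul_one y⟩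
    obtain ⟨_, ⟨t, rfl⟩, hyt, hxyt⟩ := hx (AddMonoidHom.mulLeft y).range
      (by rintro _ ⟨a, rfl⟩ s; exact ⟨a * s, (mul_assoc y a s).symm⟩)
      (fun h ↦ hy (AddSubgroup.mem_bot.mp (h ▸ hy_mem)))
    exact ⟨t, hyt, hxyt⟩

theorem IsRightSingular.exists_mul_ne_zero {ι : Type*} {x : S} (hx : IsRightSingular x)
    {y : ι → S} (hy : y ≠ 0) (s : Finset ι) :
    ∃ t, (∃ i, y i * t ≠ 0) ∧ ∀ i ∈ s, x * (y i * t) = 0 := by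
  classical
  induction s using Finset.induction_on with
  | empty => exact ⟨1, by simpa using Function.ne_iff.mp hy, by simp⟩
  | insert a s _ ih =>
    obtain ⟨t, hyt, hxyt⟩ := ih
    by_cases hat : y a * t = 0
    · exact ⟨t, hyt, by simpa [hat] using hxyt⟩
    obtain ⟨u, hu, hxu⟩ := hx _ hat
    refine ⟨t * u, ⟨a, by rwa [← mul_assoc]⟩, Finset.forall_mem_insert .. |>.mpr ⟨?_, ?_⟩⟩
    · rwa [← mul_assoc (y a)]
    · intro i hi
      rw [← mul_assoc (y i), ← mul_assoc x, hxyt i hi, zero_mul]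

theorem IsRightSingular.exists_mul_ne_zero_of_finite_support {ι : Type*} {x : S}
    (hx : IsRightSingular x) {y : ι → S} (hy : y ≠ 0) (hfin : y.support.Finite) :
    ∃ t, (∃ i, y i * t ≠ 0) ∧ ∀ i, x * (y i * t) = 0 := by
  obtain ⟨t, hyt, hxyt⟩ := hx.exists_mul_ne_zero hy hfin.toFinset
  refine ⟨t, hyt, fun i ↦ ?_⟩
  by_cases hi : y i = 0
  · simp [hi]
  · exact hxyt i (hfin.mem_toFinset.mpr hi)

theorem isRightNonsingular_of_star_mul_self_eq_zero [StarRing S]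
    (h : ∀ x : S, star x * x = 0 → x = 0) : IsRightNonsingular S := by
  intro x hx
  by_contra hx0
  obtain ⟨t, hxt, hxxt⟩ := hx (star x) (star_ne_zero.mpr hx0)
  refine hxt (h _ ?_)
  rw [star_mul, star_star, mul_assoc, hxxt, mul_zero]

end RightSingular

section Involution

variable {R G : Type*} [Group G]

/-- The involution `∑ a_g g ↦ ∑ (star a_g) g⁻¹` of the group ring of `G` over a star ring. It is not
a global instance, since other involutions of a group ring are also in use. -/
noncomputable abbrev groupRingStarRing [Ring R] [StarRing R] : StarRing (MonoidAlgebra R G) where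
  star x := MonoidAlgebra.map (starAddEquiv : R ≃+ R).toAddMonoidHom (mapDomain (·⁻¹) x)
  star_involutive x := by
    induction x using MonoidAlgebra.induction_linear with
    | zero => simp
    | add x y hx hy => simp only [mapDomain_add, MonoidAlgebra.map_add, hx, hy]
    | single g a => simp
  star_mul x y := by
    induction x using MonoidAlgebra.induction_linear with
    | zero => simp
    | add x x' hx hx' => simp only [add_mul, mul_add, mapDomain_add, MonoidAlgebra.map_add, hx, hx']
    | single g a =>
      induction y using MonoidAlgebra.induction_linear with
      | zero => simp
      | add y y' hy hy' =>
        simp only [add_mul, mul_add, mapDomain_add, MonoidAlgebra.map_add, hy, hy']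
      | single h b => simp [single_mul_single]
  star_add x y := by simp only [mapDomain_add, MonoidAlgebra.map_add]

attribute [local instance] groupRingStarRing

theorem coeff_star_inv [Ring R] [StarRing R] (x : MonoidAlgebra R G) (g : G) :
    (star x).coeff g⁻¹ = star (x.coeff g) := by
  simp [star, mapDomain, Finsupp.mapDomain_apply inv_injective]

theorem coeff_star_mul_self_one [Ring R] [StarRing R] (x : MonoidAlgebra R G) :
    (star x * x).coeff 1 = ∑ g ∈ x.coeff.support, star (x.coeff g) * x.coeff g := by
  simp only [coeff_mul_apply_right, one_mul, coeff_star_inv, Finsupp.sum]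

theorem isRightNonsingular_monoidAlgebra_of_starOrderedRing [Ring R] [PartialOrder R] [StarRing R]
    [StarOrderedRing R] [NoZeroDivisors R] : IsRightNonsingular (MonoidAlgebra R G) := by
  refine isRightNonsingular_of_star_mul_self_eq_zero fun x hx ↦ ?_
  have hsum : ∑ g ∈ x.coeff.support, star (x.coeff g) * x.coeff g = 0 := by
    rw [← coeff_star_mul_self_one, hx, coeff_zero, Finsupp.zero_apply]
  rw [Finset.sum_eq_zero_iff_of_nonneg fun _ _ ↦ star_mul_self_nonneg _] at hsum
  ext g
  by_contra hg
  exact hg (by simpa using hsum g (Finsupp.mem_support_iff.mpr hg))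

end Involution

section CoefficientRing

theorem mem_range_map_of_forall_mem_support {R S M : Type*} [Semiring R] [Semiring S] (f : R →+ S)
    {x : MonoidAlgebra S M} (hx : ∀ g ∈ x.coeff.support, x.coeff g ∈ Set.range f) :
    x ∈ Set.range (MonoidAlgebra.map (M := M) f) := by
  rw [range_map]
  intro g
  by_cases hg : x.coeff g = 0
  · exact ⟨0, by rw [map_zero, hg]⟩
  · exact hx g (Finsupp.mem_support_iff.mpr hg)

theorem IsRightNonsingular.of_injective {A B : Type*} [Ring A] [Ring B] {f : A →+* B}
    (hf : Function.Injective f) (hsing : ∀ x, IsRightSingular x → IsRightSingular (f x))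
    (hB : IsRightNonsingular B) : IsRightNonsingular A :=
  fun x hx ↦ (map_eq_zero_iff f hf).mp (hB _ (hsing x hx))

end CoefficientRing

section FreeExtension

variable {R S G ι : Type*} [CommRing R] [Ring S] [Algebra R S] (b : Module.Basis ι R S)

/-- The coordinates in `R[G]` of an element of `S[G]`, for an `R`-basis `b` of `S`: writing
`y = ∑ i, b i • y i` with `y i` in `R[G]`, this is the family `y`. -/
noncomputable def groupRingCoord : MonoidAlgebra S G →+ (ι → MonoidAlgebra R G) where
  toFun y i := MonoidAlgebra.map (b.coord i).toAddMonoidHom y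
  map_zero' := by ext; simp
  map_add' y y' := by ext; simp

theorem coeff_groupRingCoord (y : MonoidAlgebra S G) (i : ι) (g : G) :
    (groupRingCoord b y i).coeff g = b.repr (y.coeff g) i := by
  simp [groupRingCoord]

theorem groupRingCoord_single (g : G) (a : S) (i : ι) :
    groupRingCoord b (single g a) i = single g (b.repr a i) := by
  simp [groupRingCoord]

theorem groupRingCoord_injective :
    Function.Injective (groupRingCoord b : MonoidAlgebra S G → ι → MonoidAlgebra R G) := by
  intro y y' h
  ext g
  refine b.ext_elem fun i ↦ ?_
  rw [← coeff_groupRingCoord, ← coeff_groupRingCoord, h]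

theorem finite_support_groupRingCoord (y : MonoidAlgebra S G) :
    (Function.support (groupRingCoord b y)).Finite := by
  refine (y.coeff.support.finite_toSet.biUnion fun g _ ↦
    (b.repr (y.coeff g)).support.finite_toSet).subset fun i hi ↦ ?_
  obtain ⟨g, hg⟩ := Finsupp.ne_iff.mp (coeff_eq_zero.not.mpr hi)
  rw [coeff_groupRingCoord] at hg
  have hyg : y.coeff g ≠ 0 := fun h ↦ hg (by simp [h])
  exact Set.mem_biUnion (Finsupp.mem_support_iff.mpr hyg) (Finsupp.mem_support_iff.mpr hg)

variable [Monoid G]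

theorem groupRingCoord_mul_mapRingHom (y : MonoidAlgebra S G) (t : MonoidAlgebra R G) (i : ι) :
    groupRingCoord b (y * mapRingHom G (algebraMap R S) t) i = groupRingCoord b y i * t := by
  induction y using MonoidAlgebra.induction_linear with
  | zero => simp
  | add y y' hy hy' => simp only [add_mul, map_add, Pi.add_apply, hy, hy']
  | single g a =>
    induction t using MonoidAlgebra.induction_linear with
    | zero => simp
    | add t t' ht ht' => simp only [mul_add, map_add, Pi.add_apply, ht, ht']
    | single h c =>
      simp [groupRingCoord_single, single_mul_single, ← Algebra.commutes, ← Algebra.smul_def,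
        mul_comm c]

theorem groupRingCoord_mapRingHom_mul (t : MonoidAlgebra R G) (y : MonoidAlgebra S G) (i : ι) :
    groupRingCoord b (mapRingHom G (algebraMap R S) t * y) i = t * groupRingCoord b y i := by
  induction y using MonoidAlgebra.induction_linear with
  | zero => simp
  | add y y' hy hy' => simp only [mul_add, map_add, Pi.add_apply, hy, hy']
  | single g a =>
    induction t using MonoidAlgebra.induction_linear with
    | zero => simp
    | add t t' ht ht' => simp only [add_mul, map_add, Pi.add_apply, ht, ht']
    | single h c => simp [groupRingCoord_single, single_mul_single, ← Algebra.smul_def]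

variable [Module.Free R S] {x : MonoidAlgebra R G}

theorem IsRightSingular.mapRingHom_of_free (hx : IsRightSingular x) :
    IsRightSingular (mapRingHom G (algebraMap R S) x) := by
  intro y hy
  let b := Module.Free.chooseBasis R S
  have hinj := groupRingCoord_injective b (G := G)
  obtain ⟨t, ⟨i, hyt⟩, hxyt⟩ := hx.exists_mul_ne_zero_of_finite_support
    ((map_ne_zero_iff _ hinj).mpr hy) (finite_support_groupRingCoord b y)
  refine ⟨mapRingHom G (algebraMap R S) t, fun h ↦ hyt ?_, (map_eq_zero_iff _ hinj).mp ?_⟩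
  · rw [← groupRingCoord_mul_mapRingHom, h, map_zero, Pi.zero_apply]
  · ext1 j
    rw [groupRingCoord_mapRingHom_mul, groupRingCoord_mul_mapRingHom, hxyt j, Pi.zero_apply]

theorem IsRightSingular.of_mapRingHom_of_free [FaithfulSMul R S]
    (hx : IsRightSingular (mapRingHom G (algebraMap R S) x)) : IsRightSingular x := by
  intro y hy
  let b := Module.Free.chooseBasis R S
  have hinj : Function.Injective (mapRingHom G (algebraMap R S)) :=
    map_injective _ (FaithfulSMul.algebraMap_injective R S)
  obtain ⟨t, hyt, hxyt⟩ := hx _ ((map_ne_zero_iff _ hinj).mpr hy)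
  obtain ⟨i, hi⟩ := Function.ne_iff.mp ((map_ne_zero_iff _ (groupRingCoord_injective b)).mpr hyt)
  refine ⟨groupRingCoord b t i, ?_, ?_⟩
  · rwa [groupRingCoord_mapRingHom_mul] at hi
  · rw [← groupRingCoord_mapRingHom_mul, ← groupRingCoord_mapRingHom_mul, hxyt, map_zero,
      Pi.zero_apply]

variable (R S) in
theorem IsRightNonsingular.monoidAlgebra_of_free [FaithfulSMul R S]
    (h : IsRightNonsingular (MonoidAlgebra S G)) : IsRightNonsingular (MonoidAlgebra R G) :=
  h.of_injective (f := mapRingHom G (algebraMap R S))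
    (map_injective _ (FaithfulSMul.algebraMap_injective R S)) fun _ ↦ .mapRingHom_of_free

end FreeExtension

section Localization

variable {R S G : Type*} [CommRing R] [CommRing S] [Algebra R S] (M : Submonoid R)
  [IsLocalization M S] [Monoid G]

theorem exists_mapRingHom_eq_algebraMap_smul (y : MonoidAlgebra S G) :
    ∃ d ∈ M, ∃ z, mapRingHom G (algebraMap R S) z = algebraMap R S d • y := by
  obtain ⟨d, hd⟩ := IsLocalization.exist_integer_multiples M y.coeff.support y.coeff
  refine ⟨d, d.2, mem_range_map_of_forall_mem_support (algebraMap R S : R →+ S) fun g hg ↦ ?_⟩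
  obtain ⟨r, hr⟩ := hd g (Finsupp.support_smul hg)
  exact ⟨r, hr.trans (Algebra.smul_def _ _)⟩

variable {M}

theorem IsRightSingular.mapRingHom_of_isLocalization (hM : M ≤ nonZeroDivisors R)
    {x : MonoidAlgebra R G} (hx : IsRightSingular x) :
    IsRightSingular (mapRingHom G (algebraMap R S) x) := by
  intro y hy
  obtain ⟨d, hd, z, hz⟩ := exists_mapRingHom_eq_algebraMap_smul M y
  have hunit : IsUnit (algebraMap R S d) := IsLocalization.map_units S ⟨d, hd⟩
  have hinj : Function.Injective (mapRingHom G (algebraMap R S)) :=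
    map_injective _ (IsLocalization.injective S hM)
  obtain ⟨t, hzt, hxzt⟩ := hx z fun h ↦
    hy (hunit.smul_eq_zero.mp (by rw [← hz, h, map_zero]))
  have hyt : algebraMap R S d • (y * mapRingHom G (algebraMap R S) t) =
      mapRingHom G (algebraMap R S) (z * t) := by
    rw [map_mul, hz, smul_mul_assoc]
  refine ⟨mapRingHom G (algebraMap R S) t, fun h ↦ hzt (hinj ?_), hunit.smul_eq_zero.mp ?_⟩
  · rw [← hyt, h, smul_zero, map_zero]
  · rw [← mul_smul_comm, hyt, ← map_mul, hxzt, map_zero]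

variable (S) in
theorem IsRightNonsingular.monoidAlgebra_of_isLocalization (hM : M ≤ nonZeroDivisors R)
    (h : IsRightNonsingular (MonoidAlgebra S G)) : IsRightNonsingular (MonoidAlgebra R G) :=
  h.of_injective (f := mapRingHom G (algebraMap R S))
    (map_injective _ (IsLocalization.injective S hM)) fun _ ↦ .mapRingHom_of_isLocalization hM

end Localization

section CharZero

open Cardinal

universe u v

theorem nonempty_ringHom_of_lift_mk_le (F : Type u) (L : Type v) [Field F] [CharZero F] [Field L]
    [CharZero L] [IsAlgClosed L] (hL : ℵ₀ < #L) (hFL : lift.{v} #F ≤ lift.{u} #L) :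
    Nonempty (F →+* L) := by
  let P := MvPolynomial L F
  let E := AlgebraicClosure (FractionRing P)
  have hL' : ℵ₀ ≤ lift.{u} #L := aleph0_le_lift.mpr hL.le
  have hP : #P = lift.{u} #L := by
    rw [MvPolynomial.cardinalMk_eq_max_lift, max_eq_right hFL, max_eq_left hL']
  let f : P →+* E := (algebraMap (FractionRing P) E).comp (algebraMap P (FractionRing P))
  have hf : Function.Injective f :=
    (algebraMap (FractionRing P) E).injective.comp (IsFractionRing.injective P _)
  have hE : #E = lift.{u} #L := by
    apply le_antisymm
    · calc #E ≤ max #(FractionRing P) ℵ₀ := Algebra.IsAlgebraic.cardinalMk_le_max _ _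
        _ = lift.{u} #L := by rw [mk_fractionRing, hP, max_eq_left hL']
    · exact hP ▸ mk_le_of_injective hf
  have : CharZero E := charZero_of_injective_ringHom hf
  obtain ⟨e⟩ : Nonempty (E ≃+* L) := by
    refine IsAlgClosed.ringEquiv_of_equiv_of_charZero ?_ (lift_mk_eq'.mp ?_)
    · rwa [hE, aleph0_lt_lift]
    · rw [hE, lift_lift, lift_umax]
  exact ⟨(e.toRingHom.comp f).comp MvPolynomial.C⟩

theorem isRightNonsingular_monoidAlgebra_of_countable (F G : Type*) [Field F] [CharZero F]
    [Countable F] [Group G] : IsRightNonsingular (MonoidAlgebra F G) := by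
  obtain ⟨f⟩ := nonempty_ringHom_of_lift_mk_le F ℂ
    (by simpa using aleph0_lt_continuum)
    ((lift_le_aleph0.mpr mk_le_aleph0).trans (by simpa using aleph0_le_continuum))
  let := f.toAlgebra
  open scoped ComplexOrder in
  exact .monoidAlgebra_of_free F ℂ isRightNonsingular_monoidAlgebra_of_starOrderedRing

theorem exists_countable_subfield_mem_range_mapRingHom {K M : Type*} [Field K] [Monoid M]
    (x : MonoidAlgebra K M) :
    ∃ F : Subfield K, Countable F ∧ x ∈ Set.range (mapRingHom M (algebraMap F K)) := by
  have hcoeff : (x.coeff '' x.coeff.support).Countable :=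
    x.coeff.support.countable_toSet.image _
  refine ⟨Subfield.closure (x.coeff '' x.coeff.support), ?_, ?_⟩
  · rw [← mk_le_aleph0_iff]
    exact (Subfield.cardinalMk_closure_le_max _).trans (max_le hcoeff.le_aleph0 le_rfl)
  · refine mem_range_map_of_forall_mem_support _ fun g hg ↦ ?_
    exact ⟨⟨x.coeff g, Subfield.subset_closure (Set.mem_image_of_mem _ hg)⟩, rfl⟩

theorem isRightNonsingular_monoidAlgebra_of_charZero (K G : Type*) [Field K] [CharZero K]
    [Group G] : IsRightNonsingular (MonoidAlgebra K G) := by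
  intro x hx
  obtain ⟨F, _, z, rfl⟩ := exists_countable_subfield_mem_range_mapRingHom x
  rw [isRightNonsingular_monoidAlgebra_of_countable F G z hx.of_mapRingHom_of_free, map_zero]

end CharZero

/-- Let `R` be a commutative integral domain of characteristic `0` and let `G` be any group.
Then the group ring `RG` is right nonsingular: every element of `RG` whose right annihilator
is an essential right ideal of `RG` is zero.  Right ideals are encoded as additive subgroups
closed under right multiplication. -/
theorem stmt10 (R : Type*) [CommRing R] [IsDomain R] [CharZero R]
    (G : Type*) [Group G] :
    ∀ x : MonoidAlgebra R G,
      (∀ J : AddSubgroup (MonoidAlgebra R G),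
        (∀ t ∈ J, ∀ s : MonoidAlgebra R G, t * s ∈ J) → J ≠ ⊥ →
          ∃ t ∈ J, t ≠ 0 ∧ x * t = 0) →
      x = 0 := by
  intro x hx
  have : CharZero (FractionRing R) :=
    charZero_of_injective_algebraMap (IsFractionRing.injective R (FractionRing R))
  have hK := isRightNonsingular_monoidAlgebra_of_charZero (FractionRing R) G
  exact hK.monoidAlgebra_of_isLocalization (FractionRing R) le_rfl x
    (isRightSingular_iff_forall_addSubgroup.mpr hx)
end

section
/- Let R be a commutative integral domain of characteristic 0 and let G be any group. Then the group ring RG is centrally essential if and only if RG is commutative. -/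
/-!
Let `g, h : G` and let `c` be central in `RG`. Then `(gh - hg)c = g(hc) - (hc)g`, so on every
conjugacy class the coefficients of `(gh - hg)c` sum to zero. If this element is itself central,
its coefficients are constant on conjugacy classes, so a nonzero one would be annihilated by the
size of its class, which is finite and positive; as `R` is torsion-free, `(gh - hg)c = 0`.
Central essentiality of `RG` therefore forces `gh = hg`.
-/

theorem IsCentrallyEssential.of_mul_comm {S : Type*} [Ring S] (h : ∀ x y : S, x * y = y * x) :
    IsCentrallyEssential S := by
  have mem_center (x : S) : x ∈ Set.center S := Semigroup.mem_center_iff.mpr fun y ↦ h y x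
  exact fun a ha ↦ ⟨1, mem_center 1, mem_center _, by rwa [mul_one]⟩

open MonoidAlgebra

section ClassTrace

variable {R G : Type*} [Semiring R] [Group G]

/-- The Hattori–Stallings trace of the group ring: it records, for each conjugacy class of `G`,
the sum of the coefficients over that class. The class may be infinite, since elements of the
group ring have finite support. -/
noncomputable def classTrace : MonoidAlgebra R G →+ (ConjClasses G →₀ R) :=
  (Finsupp.mapDomain.addMonoidHom ConjClasses.mk).comp coeffAddEquiv.toAddMonoidHom

theorem classTrace_single (g : G) (r : R) :
    classTrace (single g r) = Finsupp.single (ConjClasses.mk g) r :=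
  Finsupp.mapDomain_single

theorem classTrace_apply_mk [DecidableEq (ConjClasses G)] (x : MonoidAlgebra R G) (g : G) :
    classTrace x (ConjClasses.mk g) =
      ∑ k ∈ x.coeff.support with ConjClasses.mk k = ConjClasses.mk g, x.coeff k :=
  Finsupp.mapDomain_apply_eq_sum _ _

theorem isConj_mul_comm (g h : G) : IsConj (g * h) (h * g) :=
  isConj_iff.mpr ⟨h, by group⟩

theorem classTrace_single_one_mul_comm (g : G) (x : MonoidAlgebra R G) :
    classTrace (single g 1 * x) = classTrace (x * single g 1) := by
  induction x using induction_linear with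
  | zero => rw [mul_zero, zero_mul]
  | add x y hx hy => rw [mul_add, add_mul, map_add, map_add, hx, hy]
  | single h r =>
    rw [single_mul_single, single_mul_single, one_mul, mul_one, classTrace_single,
      classTrace_single, ConjClasses.mk_eq_mk_iff_isConj.mpr (isConj_mul_comm g h)]

theorem coeff_eq_of_mem_center_of_isConj {z : MonoidAlgebra R G}
    (hz : z ∈ Set.center (MonoidAlgebra R G)) {g h : G} (hgh : IsConj g h) :
    z.coeff g = z.coeff h := by
  obtain ⟨k, rfl⟩ := isConj_iff.mp hgh
  have hcomm : single k 1 * z = z * single k 1 := Semigroup.mem_center_iff.mp hz _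
  simpa using congrArg (fun x ↦ x.coeff (k * g)) hcomm

theorem eq_zero_of_mem_center_of_classTrace_eq_zero [IsAddTorsionFree R] {z : MonoidAlgebra R G}
    (hz : z ∈ Set.center (MonoidAlgebra R G)) (htr : classTrace z = 0) : z = 0 := by
  classical
  ext g
  by_contra hg
  let C := {k ∈ z.coeff.support | ConjClasses.mk k = ConjClasses.mk g}
  have hC : C.card ≠ 0 :=
    Finset.card_ne_zero_of_mem (Finset.mem_filter.mpr ⟨Finsupp.mem_support_iff.mpr hg, rfl⟩)
  have hsum : C.card • z.coeff g = 0 := calc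
    C.card • z.coeff g = ∑ k ∈ C, z.coeff k := by
      refine (Finset.sum_eq_card_nsmul fun k hk ↦ ?_).symm
      exact coeff_eq_of_mem_center_of_isConj hz
        (ConjClasses.mk_eq_mk_iff_isConj.mp (Finset.mem_filter.mp hk).2)
    _ = classTrace z (ConjClasses.mk g) := (classTrace_apply_mk z g).symm
    _ = 0 := by rw [htr, Finsupp.zero_apply]
  exact hg ((nsmul_eq_zero_iff_right hC).mp hsum)

end ClassTrace

theorem IsCentrallyEssential.commute_of_monoidAlgebra {R G : Type*} [Ring R] [Nontrivial R]
    [IsAddTorsionFree R] [Group G] (hRG : IsCentrallyEssential (MonoidAlgebra R G)) (g h : G) :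
    Commute g h := by
  by_contra hgh
  let a : MonoidAlgebra R G := single g 1 * single h 1 - single h 1 * single g 1
  have ha : a ≠ 0 := by
    rw [sub_ne_zero, single_mul_single, single_mul_single, mul_one]
    exact fun heq ↦ hgh (single_left_injective one_ne_zero heq)
  obtain ⟨c, hc, hac, hac_ne⟩ := hRG a ha
  have hac_eq : a * c = single g 1 * (single h 1 * c) - single h 1 * c * single g 1 := by
    rw [sub_mul, mul_assoc, mul_assoc, mul_assoc, Semigroup.mem_center_iff.mp hc (single g 1)]
  refine hac_ne (eq_zero_of_mem_center_of_classTrace_eq_zero hac ?_)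
  rw [hac_eq, map_sub, classTrace_single_one_mul_comm, sub_self]

theorem monoidAlgebra_mul_comm_of_commute {R M : Type*} [CommSemiring R] [Semigroup M]
    (hM : ∀ g h : M, Commute g h) (x y : MonoidAlgebra R M) : x * y = y * x :=
  let _ : CommSemigroup M := { ‹Semigroup M› with mul_comm := fun g h ↦ (hM g h).eq }
  mul_comm x y

theorem stmt11_general (R : Type*) [CommRing R] [IsAddTorsionFree R] (G : Type*) [Group G] :
    IsCentrallyEssential (MonoidAlgebra R G) ↔
      ∀ x y : MonoidAlgebra R G, x * y = y * x := by
  refine ⟨fun hRG ↦ ?_, .of_mul_comm⟩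
  cases subsingleton_or_nontrivial R
  · exact fun _ _ ↦ Subsingleton.elim _ _
  · exact monoidAlgebra_mul_comm_of_commute hRG.commute_of_monoidAlgebra

/-- Let `R` be a commutative integral domain of characteristic `0` and let `G` be any group.
Then the group ring `RG` is centrally essential if and only if `RG` is commutative. -/
theorem stmt11 (R : Type*) [CommRing R] [IsDomain R] [CharZero R]
    (G : Type*) [Group G] :
    IsCentrallyEssential (MonoidAlgebra R G) ↔
      ∀ x y : MonoidAlgebra R G, x * y = y * x :=
  stmt11_general R G
end

section
/- Let R be a (not necessarily commutative) domain of characteristic 0, i.e., a nonzero unital ring without zero divisors, and let G be any group. Then the group ring RG is centrally essential if and only if RG is commutative. -/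
/-!
A centrally essential ring with reduced center is commutative: if `e = ⁅x, y⁆` is central and
nonzero, then `c * ⁅x, y⁆ = ⁅c * x, y⁆` vanishes as soon as `c` and `c * x` are central, and
`c = e` or a suitable central multiple of `e` leads to a nonzero central element of square zero.

It remains to see that the center of a group ring `R[G]` is reduced. The coefficients of a central
element lie in a finitely generated subring of the center of `R`, and by the Nullstellensatz the
homomorphisms from such a subring to `ℂ` separate points. Over `ℂ`, the involution
`∑ a_g g ↦ ∑ conj a_g g⁻¹` satisfies `x * star x = 0 → x = 0`, because the coefficient of
`x * star x` at `1` is `∑ |a_g|²`; hence a normal element of square zero vanishes.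
-/

section Center

variable {A B : Type*} [Ring A] [Ring B]

theorem isReduced_center_iff :
    IsReduced (Subring.center A) ↔ ∀ z ∈ Set.center A, z * z = 0 → z = 0 := by
  rw [isReduced_iff_pow_one_lt 2 one_lt_two]
  simp only [Subtype.forall, Subtype.ext_iff, sq, ZeroMemClass.coe_zero]
  rfl

theorem mem_center_of_map_mem_center {f : A →+* B} (hf : Function.Injective f) {z : A}
    (hz : f z ∈ Set.center B) : z ∈ Set.center A :=
  Semigroup.mem_center_iff.mpr fun x => hf <| by
    simpa only [map_mul] using Semigroup.mem_center_iff.mp hz (f x)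

theorem mul_lie_eq_zero_of_mem_center {c x : A} (hc : c ∈ Set.center A)
    (hcx : c * x ∈ Set.center A) (y : A) : c * ⁅x, y⁆ = 0 := by
  have hcy : c * y = y * c := (Semigroup.mem_center_iff.mp hc y).symm
  calc c * ⁅x, y⁆ = c * x * y - c * y * x := by simp only [Ring.lie_def, mul_sub, mul_assoc]
    _ = c * x * y - y * (c * x) := by rw [hcy, mul_assoc y c x]
    _ = 0 := by rw [Semigroup.mem_center_iff.mp hcx y, sub_self]

theorem isReduced_center_of_mul_star_self_eq_zero [StarRing A]
    (h : ∀ x : A, x * star x = 0 → x = 0) : IsReduced (Subring.center A) := by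
  refine isReduced_center_iff.mpr fun z hz hsq => h z (h _ ?_)
  have hcomm : star z * z = z * star z := Semigroup.mem_center_iff.mp hz (star z)
  calc z * star z * star (z * star z)
      = z * (star z * z) * star z := by simp only [star_mul, star_star, mul_assoc]
    _ = z * z * (star z * star z) := by simp only [hcomm, mul_assoc]
    _ = 0 := by rw [hsq, zero_mul]

end Center

namespace IsCentrallyEssential

variable {A : Type*} [Ring A]

theorem lie_eq_zero_of_lie_mem_center (h : IsCentrallyEssential A) [IsReduced (Subring.center A)]
    {x y : A} (he : ⁅x, y⁆ ∈ Set.center A) : ⁅x, y⁆ = 0 := by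
  have hred := isReduced_center_iff.mp ‹IsReduced (Subring.center A)›
  have hex : ⁅x, y⁆ * x = 0 := by
    by_contra hex
    obtain ⟨k, hk, hexk, hexk_ne⟩ := h _ hex
    have hkx : x * k = k * x := Semigroup.mem_center_iff.mp hk x
    have hek : ⁅x, y⁆ * k ∈ Set.center A := Set.mul_mem_center he hk
    have hek_zero : ⁅x, y⁆ * k = 0 := by
      refine hred _ hek ?_
      have hekx : ⁅x, y⁆ * k * x ∈ Set.center A := by rwa [mul_assoc, ← hkx, ← mul_assoc]
      rw [← mul_assoc, mul_lie_eq_zero_of_mem_center hek hekx, zero_mul]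
    exact hexk_ne (by rw [mul_assoc, hkx, ← mul_assoc, hek_zero, zero_mul])
  exact hred _ he (mul_lie_eq_zero_of_mem_center he (hex ▸ Set.zero_mem_center) y)

theorem commute (h : IsCentrallyEssential A) [IsReduced (Subring.center A)] (x y : A) :
    Commute x y := by
  by_contra hxy
  obtain ⟨c, hc, hcomm, hne⟩ := h ⁅x, y⁆ (mt commute_iff_lie_eq.mpr hxy)
  have hlie : ⁅x, y⁆ * c = ⁅x * c, y⁆ := by
    have hcy : c * y = y * c := (Semigroup.mem_center_iff.mp hc y).symm
    simp only [Ring.lie_def, sub_mul, mul_assoc, hcy]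
  rw [hlie] at hcomm hne
  exact hne (h.lie_eq_zero_of_lie_mem_center hcomm)

end IsCentrallyEssential

theorem isCentrallyEssential_of_forall_commute {A : Type*} [Ring A] (h : ∀ x y : A, Commute x y) :
    IsCentrallyEssential A := fun a ha =>
  ⟨1, Set.one_mem_center, Semigroup.mem_center_iff.mpr fun x => h x _, by rwa [mul_one]⟩

theorem isCentrallyEssential_iff_forall_commute {A : Type*} [Ring A]
    [IsReduced (Subring.center A)] : IsCentrallyEssential A ↔ ∀ x y : A, Commute x y :=
  ⟨fun h => h.commute, isCentrallyEssential_of_forall_commute⟩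

section Nullstellensatz

theorem nonempty_algHom_of_finiteType (K L B : Type*) [Field K] [Field L] [IsAlgClosed L]
    [Algebra K L] [CommRing B] [Nontrivial B] [Algebra K B] [Algebra.FiniteType K B] :
    Nonempty (B →ₐ[K] L) := by
  obtain ⟨m, hm⟩ := Ideal.exists_maximal B
  let := Ideal.Quotient.field m
  have : Module.Finite K (B ⧸ m) := finite_of_finite_type_of_isJacobsonRing K (B ⧸ m)
  exact ⟨(IsAlgClosed.lift : (B ⧸ m) →ₐ[K] L).comp (Ideal.Quotient.mkₐ K m)⟩

variable {A L B : Type*} [CommRing A] [IsDomain A] [Field L] [IsAlgClosed L] [Algebra A L]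
  [FaithfulSMul A L] [CommRing B] [Algebra A B] [Algebra.FiniteType A B]

open scoped TensorProduct in
theorem nonempty_algHom_of_finiteType_of_injective
    (hB : Function.Injective (algebraMap A B)) : Nonempty (B →ₐ[A] L) := by
  let K := FractionRing A
  let : Algebra K L := FractionRing.liftAlgebra A L
  have : Nontrivial (K ⊗[A] B) :=
    (Algebra.TensorProduct.includeLeft_injective (S := A) (A := K) hB).nontrivial
  obtain ⟨φ⟩ := nonempty_algHom_of_finiteType K L (K ⊗[A] B)
  exact ⟨(φ.restrictScalars A).comp Algebra.TensorProduct.includeRight⟩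

variable (A L) in
theorem exists_algHom_apply_ne_zero [IsReduced B] [Module.IsTorsionFree A B] {b : B}
    (hb : b ≠ 0) : ∃ φ : B →ₐ[A] L, φ b ≠ 0 := by
  let B' := Localization.Away b
  have hinj : Function.Injective (algebraMap A B') := by
    refine (injective_iff_map_eq_zero _).mpr fun a ha => ?_
    rw [IsScalarTower.algebraMap_apply A B B',
      IsLocalization.map_eq_zero_iff (Submonoid.powers b)] at ha
    obtain ⟨⟨_, n, rfl⟩, hn⟩ := ha
    rw [mul_comm, ← Algebra.smul_def] at hn
    exact (smul_eq_zero.mp hn).resolve_right (pow_ne_zero n hb)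
  obtain ⟨φ⟩ := nonempty_algHom_of_finiteType_of_injective (L := L) hinj
  refine ⟨φ.comp (IsScalarTower.toAlgHom A B B'), ?_⟩
  exact ((IsLocalization.Away.algebraMap_isUnit b).map φ).ne_zero

end Nullstellensatz

namespace GroupRing

open MonoidAlgebra

variable {R S G : Type*} [Group G]

section Center

theorem mem_center_iff [Semiring R] {z : R[G]} :
    z ∈ Set.center R[G] ↔
      (∀ g, z.coeff g ∈ Set.center R) ∧ ∀ g h, z.coeff (g * h) = z.coeff (h * g) := by
  simp only [Semigroup.mem_center_iff]
  constructor
  · refine fun hz => ⟨fun g r => ?_, fun g h => ?_⟩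
    · simpa using congrArg (fun x => x.coeff g) (hz (single 1 r))
    · simpa using congrArg (fun x => x.coeff g) (hz (single h⁻¹ 1)).symm
  · rintro ⟨hcenter, hclass⟩ x
    induction x using MonoidAlgebra.induction_linear with
    | zero => rw [zero_mul, mul_zero]
    | add x y hx hy => rw [add_mul, mul_add, hx, hy]
    | single g r =>
      ext h
      rw [coeff_single_mul_apply, coeff_mul_single_apply, hcenter, hclass]

theorem mapRingHom_mem_center [Semiring R] [CommSemiring S] (f : R →+* S) {z : R[G]}
    (hz : z ∈ Set.center R[G]) : mapRingHom G f z ∈ Set.center S[G] := by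
  refine mem_center_iff.mpr ⟨fun g => ?_, fun g h => ?_⟩
  · simp only [Set.center_eq_univ, Set.mem_univ]
  · simp only [coeff_mapRingHom, (mem_center_iff.mp hz).2 g h]

end Center

section Star

variable [Semiring R] [StarRing R]

/-- The involution `∑ a_g g ↦ ∑ (star a_g) g⁻¹` of a group ring with coefficients in a star ring. -/
noncomputable instance instStarAddMonoid : StarAddMonoid R[G] where
  star x := ofCoeff ((x.coeff.mapRange star (star_zero R)).equivMapDomain (Equiv.inv G))
  star_involutive x := by ext; simp
  star_add x y := by ext; simp

@[simp]
theorem coeff_star (x : R[G]) (g : G) : (star x).coeff g = star (x.coeff g⁻¹) := by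
  simp [star]

@[simp]
theorem star_single (g : G) (r : R) : star (single g r : R[G]) = single g⁻¹ (star r) := by
  simp [star]

noncomputable instance instStarRing : StarRing R[G] where
  star_add := star_add
  star_mul x y := by
    induction x using MonoidAlgebra.induction_linear with
    | zero => simp
    | add x₁ x₂ h₁ h₂ => simp [add_mul, mul_add, h₁, h₂]
    | single g r =>
      induction y using MonoidAlgebra.induction_linear with
      | zero => simp
      | add y₁ y₂ h₁ h₂ => simp [add_mul, mul_add, h₁, h₂]
      | single h s => simp

theorem coeff_mul_star_self_one (x : R[G]) :
    (x * star x).coeff 1 = ∑ g ∈ x.coeff.support, x.coeff g * star (x.coeff g) := by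
  simp [coeff_mul_apply_left, Finsupp.sum]

end Star

theorem eq_zero_of_mul_star_self_eq_zero [Ring R] [PartialOrder R] [StarRing R]
    [StarOrderedRing R] [NoZeroDivisors R] {x : R[G]} (hx : x * star x = 0) : x = 0 := by
  have hsum : ∑ g ∈ x.coeff.support, x.coeff g * star (x.coeff g) = 0 := by
    rw [← coeff_mul_star_self_one, hx, coeff_zero, Finsupp.zero_apply]
  rw [Finset.sum_eq_zero_iff_of_nonneg fun _ _ => mul_star_self_nonneg _] at hsum
  ext g
  by_contra hg
  simpa [show x.coeff g ≠ 0 from hg] using hsum g (Finsupp.mem_support_iff.mpr hg)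

section Reduced

open scoped ComplexOrder in
theorem isReduced_center_complex : IsReduced (Subring.center ℂ[G]) :=
  isReduced_center_of_mul_star_self_eq_zero fun _ => eq_zero_of_mul_star_self_eq_zero

theorem isReduced_center_of_forall_exists_ringHom [Ring R] [CommRing S]
    [IsReduced (Subring.center S[G])] (h : ∀ r : R, r ≠ 0 → ∃ φ : R →+* S, φ r ≠ 0) :
    IsReduced (Subring.center R[G]) := by
  refine isReduced_center_iff.mpr fun z hz hsq => ?_
  ext g
  by_contra hg
  obtain ⟨φ, hφ⟩ := h (z.coeff g) hg
  have hφz : mapRingHom G φ z = 0 :=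
    isReduced_center_iff.mp ‹_› _ (mapRingHom_mem_center φ hz) (by rw [← map_mul, hsq, map_zero])
  exact hφ (by rw [← coeff_mapRingHom, hφz, coeff_zero, Finsupp.zero_apply])

theorem eq_zero_of_forall_coeff_mem_range [Ring R] [Ring S] [IsReduced (Subring.center R[G])]
    {f : R →+* S} (hf : Function.Injective f) {z : S[G]} (hz : z ∈ Set.center S[G])
    (hsq : z * z = 0) (hrange : ∀ g, z.coeff g ∈ f.range) : z = 0 := by
  have hinj : Function.Injective (mapRingHom G f) := map_injective (f : R →+ S) hf
  obtain ⟨w, rfl⟩ : z ∈ Set.range (mapRingHom G f) := (range_map (f : R →+ S)).superset hrange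
  have hw_sq : w * w = 0 := hinj (by rw [map_mul, hsq, map_zero])
  rw [isReduced_center_iff.mp ‹_› w (mem_center_of_map_mem_center hinj hz) hw_sq, map_zero]

theorem isReduced_center_of_finiteType [CommRing R] [IsReduced R] [IsAddTorsionFree R]
    [Algebra.FiniteType ℤ R] : IsReduced (Subring.center R[G]) :=
  have : IsReduced (Subring.center ℂ[G]) := isReduced_center_complex
  isReduced_center_of_forall_exists_ringHom (S := ℂ) fun _ hr =>
    let ⟨φ, hφ⟩ := exists_algHom_apply_ne_zero ℤ ℂ hr
    ⟨φ, hφ⟩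

theorem isReduced_center_of_commRing [CommRing R] [IsReduced R] [IsAddTorsionFree R] :
    IsReduced (Subring.center R[G]) := by
  refine isReduced_center_iff.mpr fun z hz hsq => ?_
  let B := Algebra.adjoin ℤ (Set.range z.coeff)
  have : Algebra.FiniteType ℤ B :=
    B.fg_iff_finiteType.mp (Subalgebra.fg_def.mpr ⟨_, z.coeff.finite_range, rfl⟩)
  have : IsReduced B := isReduced_of_injective B.val Subtype.val_injective
  have : IsAddTorsionFree B := Subtype.val_injective.isAddTorsionFree B.val.toAddMonoidHom
  have : IsReduced (Subring.center B[G]) := isReduced_center_of_finiteType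
  refine eq_zero_of_forall_coeff_mem_range (f := (B.val : B →+* R)) Subtype.val_injective hz hsq ?_
  exact fun g => ⟨⟨_, Algebra.subset_adjoin (Set.mem_range_self g)⟩, rfl⟩

theorem isReduced_center [Ring R] [IsReduced (Subring.center R)]
    [IsAddTorsionFree (Subring.center R)] : IsReduced (Subring.center R[G]) := by
  refine isReduced_center_iff.mpr fun z hz hsq => ?_
  have : IsReduced (Subring.center (Subring.center R)[G]) := isReduced_center_of_commRing
  refine eq_zero_of_forall_coeff_mem_range (f := (Subring.center R).subtype)
    Subtype.val_injective hz hsq ?_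
  exact fun g => ⟨⟨_, (mem_center_iff.mp hz).1 g⟩, rfl⟩

end Reduced

end GroupRing

theorem stmt12_general (R : Type*) [Ring R] [IsReduced (Subring.center R)]
    [IsAddTorsionFree (Subring.center R)] (G : Type*) [Group G] :
    IsCentrallyEssential (MonoidAlgebra R G) ↔
      ∀ x y : MonoidAlgebra R G, x * y = y * x :=
  have : IsReduced (Subring.center (MonoidAlgebra R G)) := GroupRing.isReduced_center
  isCentrallyEssential_iff_forall_commute

/-- Let `R` be a (not necessarily commutative) domain of characteristic `0` and let `G` be
any group. Then the group ring `RG` is centrally essential iff `RG` is commutative. -/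
theorem stmt12 (R : Type*) [Ring R] [IsDomain R] [CharZero R]
    (G : Type*) [Group G] :
    IsCentrallyEssential (MonoidAlgebra R G) ↔
      ∀ x y : MonoidAlgebra R G, x * y = y * x :=
  stmt12_general R G
end

section
/- Let R be a centrally essential unital ring of characteristic 2. Then the group ring RQ₈ of the quaternion group Q₈ of order 8 over R is a centrally essential ring. -/
/-!
Let `G` be a group whose commutator subgroup `G'` is a finite central `p`-group, and let `p` be
nilpotent in `R`. For `z ∈ G'` the central element `z - 1` of `R[G]` is nilpotent, so a nonzero `x`
can be multiplied by powers of these elements until it is still nonzero but killed by every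
`z - 1`, that is, until its coefficients are constant on the cosets of `G'`. Multiplying further by
a central element of `R` makes all coefficients central without annihilating `x`. The result is
central in `R[G]`, because `g * h` and `h * g` lie in the same coset of `G'`.
-/

open scoped commutatorElement

section Smul

variable {M X ι : Type*}

theorem exists_smul_ne_zero_and_forall [Monoid M] [Zero X] [MulAction M X] {P : ι → X → Prop}
    (hsmul : ∀ i (c : M) x, P i x → P i (c • x))
    (hexists : ∀ i x, x ≠ 0 → ∃ c : M, c • x ≠ 0 ∧ P i (c • x))
    (s : Finset ι) {x : X} (hx : x ≠ 0) : ∃ c : M, c • x ≠ 0 ∧ ∀ i ∈ s, P i (c • x) := by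
  classical
  induction s using Finset.induction_on with
  | empty => exact ⟨1, by rwa [one_smul], by simp⟩
  | insert j s _ ih =>
    obtain ⟨c, hcx, hs⟩ := ih
    obtain ⟨d, hdcx, hj⟩ := hexists j (c • x) hcx
    refine ⟨d * c, by rwa [mul_smul], ?_⟩
    rw [mul_smul, Finset.forall_mem_insert]
    exact ⟨hj, fun i hi ↦ hsmul i d _ (hs i hi)⟩

theorem exists_pow_smul_ne_zero_and_smul_pow_smul_eq_zero [MonoidWithZero M] [Zero X]
    [MulActionWithZero M X] {u : M} (hu : IsNilpotent u) {x : X} (hx : x ≠ 0) :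
    ∃ n : ℕ, u ^ n • x ≠ 0 ∧ u • u ^ n • x = 0 := by
  obtain ⟨k, hk⟩ := hu
  obtain ⟨n, hn, hn'⟩ := Nat.exists_not_and_succ_of_not_zero_of_exists
    (p := fun n ↦ u ^ n • x = 0) (by simpa using hx) ⟨k, by rw [hk, zero_smul]⟩
  exact ⟨n, hn, by rwa [smul_smul, ← pow_succ']⟩

theorem exists_smul_ne_zero_and_forall_smul_eq_zero [CommMonoidWithZero M] [Zero X]
    [MulActionWithZero M X] [Finite ι] {u : ι → M} (hu : ∀ i, IsNilpotent (u i)) {x : X}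
    (hx : x ≠ 0) : ∃ c : M, c • x ≠ 0 ∧ ∀ i, u i • c • x = 0 := by
  cases nonempty_fintype ι
  obtain ⟨c, hcx, hc⟩ := exists_smul_ne_zero_and_forall (M := M)
    (P := fun i y ↦ u i • y = 0)
    (fun i c y hy ↦ by rw [smul_comm, hy, smul_zero])
    (fun i y hy ↦
      let ⟨n, hn⟩ := exists_pow_smul_ne_zero_and_smul_pow_smul_eq_zero (hu i) hy
      ⟨u i ^ n, hn⟩)
    Finset.univ hx
  exact ⟨c, hcx, fun i ↦ hc i (Finset.mem_univ i)⟩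

end Smul

theorem isNilpotent_sub_one_of_pow_prime_pow_eq_one {A : Type*} [Ring A] {p : ℕ} (hp : p.Prime)
    (hpA : IsNilpotent (p : A)) {z : A} {n : ℕ} (hz : z ^ p ^ n = 1) : IsNilpotent (z - 1) := by
  obtain ⟨r, hr⟩ := (Commute.one_right (z - 1)).exists_add_pow_prime_pow_eq hp n
  have hpow : (z - 1) ^ p ^ n = -(p * ((z - 1) * r)) := by
    rw [sub_add_cancel, hz, one_pow, mul_one, mul_assoc] at hr
    grind
  have hnil : IsNilpotent ((z - 1) ^ p ^ n) := by
    rw [hpow]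
    exact ((Nat.cast_commute p _).isNilpotent_mul_right hpA).neg
  exact hnil.of_pow

theorem isCentrallyEssential_iff_exists_smul {R : Type*} [Ring R] :
    IsCentrallyEssential R ↔
      ∀ a : R, a ≠ 0 → ∃ c : Subring.center R, c • a ∈ Set.center R ∧ c • a ≠ 0 := by
  have hsmul (c : Subring.center R) (a : R) : c • a = a * c := (c.2.comm a).eq
  simp only [hsmul, Subtype.exists, exists_prop]
  rfl

theorem IsCentrallyEssential.exists_smul_ne_zero_and_forall_mem_center {R ι : Type*} [Ring R]
    (hR : IsCentrallyEssential R) {f : ι →₀ R} (hf : f ≠ 0) :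
    ∃ c : Subring.center R, c • f ≠ 0 ∧ ∀ i, (c • f) i ∈ Set.center R := by
  have exists_smul_mem (i : ι) (g : ι →₀ R) (hg : g ≠ 0) :
      ∃ c : Subring.center R, c • g ≠ 0 ∧ (c • g) i ∈ Set.center R := by
    by_cases hi : g i = 0
    · exact ⟨1, by rwa [one_smul], by simp [hi, Set.zero_mem_center]⟩
    · obtain ⟨c, hmem, hne⟩ := isCentrallyEssential_iff_exists_smul.mp hR (g i) hi
      exact ⟨c, fun h ↦ hne (DFunLike.congr_fun h i), hmem⟩
  obtain ⟨c, hcf, hc⟩ := exists_smul_ne_zero_and_forall (M := Subring.center R)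
    (P := fun i (g : ι →₀ R) ↦ g i ∈ Set.center R)
    (fun i c g hg ↦ Set.mul_mem_center c.2 hg) exists_smul_mem f.support hf
  refine ⟨c, hcf, fun i ↦ ?_⟩
  by_cases hi : i ∈ f.support
  · exact hc i hi
  · simp [Finsupp.notMem_support_iff.mp hi, Set.zero_mem_center]

section GroupRing

open MonoidAlgebra Subgroup

variable {R G : Type*} [Ring R]

theorem single_mem_center [Semigroup G] {g : G} {r : R} (hg : g ∈ Set.center G)
    (hr : r ∈ Set.center R) : single g r ∈ Set.center (MonoidAlgebra R G) :=
  Semigroup.mem_center_iff.mpr fun x ↦ (single_commute hg.comm hr.comm x).eq.symm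

theorem isNilpotent_single_sub_one [Monoid G] {p : ℕ} (hp : p.Prime)
    (hpR : IsNilpotent (p : R)) {z : G} {n : ℕ} (hz : z ^ p ^ n = 1) :
    IsNilpotent (single z 1 - 1 : MonoidAlgebra R G) := by
  have hpA : IsNilpotent (p : MonoidAlgebra R G) := by
    simpa using hpR.map (singleOneRingHom : R →+* MonoidAlgebra R G)
  refine isNilpotent_sub_one_of_pow_prime_pow_eq_one hp hpA (n := n) ?_
  rw [single_pow, hz, one_pow, one_def]

variable [Group G]

theorem mem_center_of_coeff_mul_comm {x : MonoidAlgebra R G}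
    (hx : ∀ g, x.coeff g ∈ Set.center R) (hcomm : ∀ g h, x.coeff (g * h) = x.coeff (h * g)) :
    x ∈ Set.center (MonoidAlgebra R G) := by
  rw [Semigroup.mem_center_iff]
  intro y
  induction y using MonoidAlgebra.induction_linear with
  | zero => rw [zero_mul, mul_zero]
  | add y z hy hz => rw [add_mul, mul_add, hy, hz]
  | single g r =>
    ext h
    rw [coeff_single_mul_apply, coeff_mul_single_apply, hcomm]
    exact Semigroup.mem_center_iff.mp (hx _) r

theorem mem_center_of_single_commutator_mul_eq {x : MonoidAlgebra R G}
    (hx : ∀ g, x.coeff g ∈ Set.center R) (hinv : ∀ z ∈ commutator G, single z 1 * x = x) :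
    x ∈ Set.center (MonoidAlgebra R G) := by
  refine mem_center_of_coeff_mul_comm hx fun g h ↦ ?_
  have hgh : ⁅g, h⁆⁻¹ * (g * h) = h * g := by rw [commutatorElement_def]; group
  rw [← hgh, ← one_mul (x.coeff (⁅g, h⁆⁻¹ * (g * h))), ← coeff_single_mul_apply,
    hinv _ (commutator_mem_commutator (mem_top g) (mem_top h))]

theorem exists_center_smul_ne_zero_and_single_mul_eq {p : ℕ} (hp : p.Prime)
    (hpR : IsNilpotent (p : R)) {N : Subgroup G} [Finite N] (hN : N ≤ center G)
    (hpN : IsPGroup p N) {x : MonoidAlgebra R G} (hx : x ≠ 0) :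
    ∃ d : Subring.center (MonoidAlgebra R G), d • x ≠ 0 ∧
      ∀ z ∈ N, single z 1 * (d • x) = d • x := by
  let u (z : N) : Subring.center (MonoidAlgebra R G) :=
    ⟨single (z : G) 1, single_mem_center (hN z.2) Set.one_mem_center⟩ - 1
  have hu (z : N) : IsNilpotent (u z) := by
    obtain ⟨n, hn⟩ := hpN z
    rw [← IsNilpotent.map_iff (f := Subring.subtype _) Subtype.val_injective]
    exact isNilpotent_single_sub_one hp hpR (congrArg Subtype.val hn)
  obtain ⟨d, hdx, hd⟩ := exists_smul_ne_zero_and_forall_smul_eq_zero hu hx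
  refine ⟨d, hdx, fun z hz ↦ ?_⟩
  have huz : (single z 1 - 1) * (d • x) = 0 := hd ⟨z, hz⟩
  rwa [sub_mul, one_mul, sub_eq_zero] at huz

theorem stmt14_general {p : ℕ} (hp : p.Prime) (hpR : IsNilpotent (p : R))
    (hR : IsCentrallyEssential R) [Finite (commutator G)] (hG : commutator G ≤ center G)
    (hpG : IsPGroup p (commutator G)) : IsCentrallyEssential (MonoidAlgebra R G) := by
  refine isCentrallyEssential_iff_exists_smul.mpr fun x hx ↦ ?_
  obtain ⟨d, hdx, hinv⟩ := exists_center_smul_ne_zero_and_single_mul_eq hp hpR hG hpG hx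
  obtain ⟨c, hcdx, hcoeff⟩ :=
    hR.exists_smul_ne_zero_and_forall_mem_center (coeff_eq_zero.not.mpr hdx)
  let c' : Subring.center (MonoidAlgebra R G) :=
    ⟨single 1 c, single_mem_center Set.one_mem_center c.2⟩
  have hc' : c' • d • x = c • d • x := by
    ext g
    exact coeff_single_one_mul ..
  refine ⟨c' * d, ?_⟩
  rw [mul_smul, hc']
  refine ⟨mem_center_of_single_commutator_mul_eq hcoeff fun z hz ↦ ?_, coeff_eq_zero.not.mp hcdx⟩
  rw [← hc', mul_smul_comm, hinv z hz]

end GroupRing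

theorem commutator_quaternionGroup_two_le_center :
    commutator (QuaternionGroup 2) ≤ Subgroup.center (QuaternionGroup 2) := by
  have commutator_mem_center (g h : QuaternionGroup 2) : ⁅g, h⁆ ∈ Subgroup.center _ := by
    revert g h
    decide
  exact Subgroup.commutator_le.mpr fun g _ h _ ↦ commutator_mem_center g h

theorem isPGroup_two_quaternionGroup_two : IsPGroup 2 (QuaternionGroup 2) :=
  IsPGroup.of_card (n := 3) (by rw [Nat.card_eq_fintype_card, QuaternionGroup.card]; norm_num)

/-- Let `R` be a centrally essential unital ring of characteristic `2`. Then the group ring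
`RQ₈` of the quaternion group of order `8` over `R` is a centrally essential ring. -/
theorem stmt14 (R : Type*) [Ring R] [CharP R 2] (hR : IsCentrallyEssential R) :
    IsCentrallyEssential (MonoidAlgebra R (QuaternionGroup 2)) :=
  stmt14_general Nat.prime_two (by rw [CharP.cast_eq_zero]; exact .zero) hR
    commutator_quaternionGroup_two_le_center (isPGroup_two_quaternionGroup_two.to_subgroup _)
end

section
/- Let R be a nonzero unital ring in which the element 2 is invertible. Then the group ring RQ₈ of the quaternion group Q₈ of order 8 over R is not a centrally essential ring. -/
/-!
If `u ^ 2` commutes with `b`, then `u` anticommutes with the commutator `⁅u, b⁆`, hence with every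
multiple of it by a central element. Should such a multiple itself be central, it both commutes and
anticommutes with `u`, so it vanishes once `2` and `u` can be cancelled. Thus `⁅u, b⁆`, if nonzero,
violates central essentiality. In `Q₈` the generator `xa 0` has central square but does not commute
with the generator `a 1`.
-/

section Ring

variable {S : Type*} [Ring S] {u a b : S}

theorem eq_zero_of_commute_of_semiconjBy_neg (h2 : IsRightRegular (2 : S))
    (hu : IsRightRegular u) (hcomm : Commute u a) (hanti : SemiconjBy u a (-a)) : a = 0 := by
  have hneg : a * u = -(a * u) := by rw [← neg_mul, ← hanti.eq, hcomm.eq]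
  have hdouble : a * u * 2 = 0 := by rw [mul_two, ← eq_neg_iff_add_eq_zero, ← hneg]
  rw [isRightRegular_iff_left_eq_zero_of_mul] at h2 hu
  exact hu a (h2 _ hdouble)

theorem not_isCentrallyEssential_of_semiconjBy_neg (h2 : IsRightRegular (2 : S))
    (hu : IsRightRegular u) (ha : a ≠ 0) (hanti : SemiconjBy u a (-a)) :
    ¬ IsCentrallyEssential S := by
  intro h
  obtain ⟨c, hc, hac, hac_ne⟩ := h a ha
  have hcu : Commute u c := (hc.comm u).symm
  have hacu : Commute u (a * c) := (hac.comm u).symm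
  have hanti_mul : SemiconjBy u (a * c) (-(a * c)) := by
    simpa only [neg_mul] using hanti.mul_right hcu
  exact hac_ne (eq_zero_of_commute_of_semiconjBy_neg h2 hu hacu hanti_mul)

theorem semiconjBy_lie_neg_of_commute_sq (h : Commute (u ^ 2) b) :
    SemiconjBy u ⁅u, b⁆ (-⁅u, b⁆) := by
  have hsq : u * (u * b) = b * u * u := by rw [← mul_assoc, ← sq, h.eq, sq, mul_assoc]
  rw [SemiconjBy, Ring.lie_def, neg_sub, mul_sub, sub_mul, hsq, mul_assoc u b u]

theorem not_isCentrallyEssential_of_commute_sq (h2 : IsRightRegular (2 : S))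
    (hu : IsRightRegular u) (hsq : Commute (u ^ 2) b) (hub : ¬ Commute u b) :
    ¬ IsCentrallyEssential S :=
  not_isCentrallyEssential_of_semiconjBy_neg h2 hu (mt commute_iff_lie_eq.mpr hub)
    (semiconjBy_lie_neg_of_commute_sq hsq)

end Ring

theorem isRightRegular_single {R M : Type*} [Semiring R] [Mul M] {r : R} {m : M}
    (hr : IsRightRegular r) (hm : IsRightRegular m) :
    IsRightRegular (MonoidAlgebra.single m r) := by
  intro f g hfg
  ext n
  have coeff_mul_single (p : MonoidAlgebra R M) :
      (p * MonoidAlgebra.single m r).coeff (n * m) = p.coeff n * r :=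
    MonoidAlgebra.coeff_mul_single_eq_coeff_mul n fun _ _ ↦ hm.eq_iff
  apply hr
  simpa only [coeff_mul_single] using congrArg (fun p ↦ p.coeff (n * m)) hfg

theorem stmt15_general {R M : Type*} [Ring R] [Nontrivial R] [Monoid M]
    (h2 : IsRightRegular (2 : R)) {x g : M} (hx : IsRightRegular x)
    (hsq : Commute (x ^ 2) g) (hxg : ¬ Commute x g) :
    ¬ IsCentrallyEssential (MonoidAlgebra R M) := by
  let ι := MonoidAlgebra.of R M
  have h2' : IsRightRegular (2 : MonoidAlgebra R M) :=
    isRightRegular_single h2 isRegular_one.right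
  have hx' : IsRightRegular (ι x) := isRightRegular_single isRegular_one.right hx
  have hsq' : Commute (ι x ^ 2) (ι g) := by simpa only [map_pow] using hsq.map ι
  have hxg' : ¬ Commute (ι x) (ι g) := fun h ↦ hxg (h.of_map MonoidAlgebra.of_injective)
  exact not_isCentrallyEssential_of_commute_sq h2' hx' hsq' hxg'

/-- Let `R` be a nonzero unital ring in which `2` is invertible. Then the group ring `RQ₈`
of the quaternion group of order `8` over `R` is not a centrally essential ring. -/
theorem stmt15 (R : Type*) [Ring R] [Nontrivial R] (h2 : IsUnit (2 : R)) :
    ¬ IsCentrallyEssential (MonoidAlgebra R (QuaternionGroup 2)) := by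
  have hsq : Commute (.xa 0 ^ 2 : QuaternionGroup 2) (.a 1) := by rw [commute_iff_eq]; decide
  have hxa : ¬ Commute (.xa 0 : QuaternionGroup 2) (.a 1) := by rw [commute_iff_eq]; decide
  exact stmt15_general h2.isRegular.right (IsRightRegular.all _) hsq hxa
end

section
/- A unital ring A is commutative if and only if A is centrally rational, i.e., for every a ∈ A and every nonzero d ∈ A there exists a central element c ∈ C(A) such that a*c ∈ C(A) and d*c ≠ 0. -/
/-!
In a centrally rational ring, two elements agree as soon as they have the same product with every
central `c` making `a * c` central, for one fixed `a`. Such a `c` can be moved next to `a` inside a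
product, so that `a * c` commutes and associates with everything, and then moved back out. Hence
`a` commutes with all elements, and associates with them even if associativity is not assumed.
-/

/-- Central rationality in element-wise form; for a unital ring `A` it says that `A` is a rational
extension of its center. `Set.center` consists of the elements that both commute and associate with
all others, so the notion is meaningful without a unit and without associativity. -/
def IsCentrallyRational (A : Type*) [Mul A] [Zero A] : Prop :=
  ∀ a d : A, d ≠ 0 → ∃ c ∈ Set.center A, a * c ∈ Set.center A ∧ d * c ≠ 0

theorem mem_center_of_comm_of_assoc {M : Type*} [Mul M] (comm : ∀ x y : M, x * y = y * x)
    (assoc : ∀ x y z : M, x * y * z = x * (y * z)) (m : M) : m ∈ Set.center M where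
  comm x := comm m x
  left_assoc x y := (assoc m x y).symm
  right_assoc x y := assoc x y m

theorem isCentrallyRational_of_comm_of_assoc {A : Type*} [Mul A] [Zero A]
    (comm : ∀ x y : A, x * y = y * x) (assoc : ∀ x y z : A, x * y * z = x * (y * z))
    (exists_mul_ne_zero : ∀ d : A, d ≠ 0 → ∃ c, d * c ≠ 0) : IsCentrallyRational A := by
  intro a d hd
  obtain ⟨c, hdc⟩ := exists_mul_ne_zero d hd
  have mem_center := mem_center_of_comm_of_assoc comm assoc
  exact ⟨c, mem_center c, mem_center (a * c), hdc⟩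

namespace IsCentrallyRational

variable {A : Type*} [NonUnitalNonAssocRing A]

theorem eq_of_forall_mul_eq (hA : IsCentrallyRational A) (a : A) {x y : A}
    (h : ∀ c ∈ Set.center A, a * c ∈ Set.center A → x * c = y * c) : x = y := by
  by_contra hxy
  obtain ⟨c, hc, hac, hne⟩ := hA a (x - y) (sub_ne_zero.mpr hxy)
  exact hne (by rw [sub_mul, h c hc hac, sub_self])

protected theorem mul_comm (hA : IsCentrallyRational A) (x y : A) : x * y = y * x := by
  refine hA.eq_of_forall_mul_eq x fun c hc hxc ↦ ?_
  calc
    x * y * c = x * (y * c) := hc.right_assoc x y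
    _ = x * (c * y) := by rw [(hc.comm y).eq]
    _ = x * c * y := (hc.mid_assoc x y).symm
    _ = y * (x * c) := hxc.comm y
    _ = y * x * c := (hc.right_assoc y x).symm

protected theorem mul_assoc (hA : IsCentrallyRational A) (x y z : A) :
    x * y * z = x * (y * z) := by
  refine hA.eq_of_forall_mul_eq z fun c hc hzc ↦ ?_
  calc
    x * y * z * c = x * y * (z * c) := hc.right_assoc (x * y) z
    _ = x * (y * (z * c)) := hzc.right_assoc x y
    _ = x * (y * z * c) := by rw [hc.right_assoc y z]
    _ = x * (y * z) * c := (hc.right_assoc x (y * z)).symm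

theorem exists_mul_ne_zero (hA : IsCentrallyRational A) {d : A} (hd : d ≠ 0) :
    ∃ c, d * c ≠ 0 := by
  obtain ⟨c, -, -, hdc⟩ := hA 0 d hd
  exact ⟨c, hdc⟩

end IsCentrallyRational

theorem stmt17_general (A : Type*) [NonUnitalNonAssocRing A] :
    ((∀ x y : A, x * y = y * x) ∧ (∀ x y z : A, x * y * z = x * (y * z)) ∧
        ∀ d : A, d ≠ 0 → ∃ c, d * c ≠ 0) ↔
      IsCentrallyRational A :=
  ⟨fun ⟨comm, assoc, exists_mul_ne_zero⟩ ↦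
      isCentrallyRational_of_comm_of_assoc comm assoc exists_mul_ne_zero,
    fun hA ↦ ⟨hA.mul_comm, hA.mul_assoc, fun _ ↦ hA.exists_mul_ne_zero⟩⟩

/-- A unital ring `A` is commutative if and only if `A` is centrally rational, i.e., for
every `a ∈ A` and every nonzero `d ∈ A` there exists a central element `c` such that
`a * c` is central and `d * c ≠ 0`. -/
theorem stmt17 (A : Type*) [Ring A] :
    (∀ x y : A, x * y = y * x) ↔
      (∀ a : A, ∀ d : A, d ≠ 0 →
        ∃ c ∈ Set.center A, a * c ∈ Set.center A ∧ d * c ≠ 0) := by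
  refine Iff.trans ⟨fun comm ↦ ⟨comm, mul_assoc, fun d hd ↦ ⟨1, ?_⟩⟩, And.left⟩ (stmt17_general A)
  rwa [mul_one]
end
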